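/- For every integer r ≥ 1 there exists a positive integer N such that for all n ≥ N, (-1)^(r-1) Δ^r log p(n) < log(1 + (√6·π/6)·(1/2)_{r-1}/(n+1)^(r-1/2)), where (a)_k denotes the rising factorial. -/

import Mathlib

section PartitionNumbers

open Filter Topology Finset

section GeneratingFunction

/-- The number of partitions of `n` into parts of size at most `M`. -/
def boundedPartitionCount (M n : ℕ) : ℕ := #(Nat.Partition.restricted n (· ≤ M))

open PowerSeries PowerSeries.WithPiTopology in
lemma powerSeriesMk_boundedPartitionCount (M : ℕ) :
    PowerSeries.mk (fun n ↦ (boundedPartitionCount M n : ℝ)) =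
      ∏ i ∈ range M, ∑' j : ℕ, (X : PowerSeries ℝ) ^ ((i + 1) * j) := by
  have h := Nat.Partition.powerSeriesMk_card_restricted_eq_tprod ℝ (· ≤ M)
  rw [tprod_eq_prod (s := range M)] at h
  · unfold boundedPartitionCount
    rw [h]
    refine prod_congr rfl fun i hi ↦ ?_
    rw [if_pos (by simpa using hi)]
  · intro i hi
    rw [if_neg (by simpa using hi)]

open PowerSeries PowerSeries.WithPiTopology in
lemma powerSeriesMk_boundedPartitionCount_succ (M : ℕ) :
    PowerSeries.mk (fun n ↦ (boundedPartitionCount (M + 1) n : ℝ)) =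
      PowerSeries.mk (fun n ↦ (boundedPartitionCount M n : ℝ)) +
        PowerSeries.mk (fun n ↦ (boundedPartitionCount (M + 1) n : ℝ)) * X ^ (M + 1) := by
  have h : (∑' j : ℕ, (X : PowerSeries ℝ) ^ ((M + 1) * j)) * (1 - X ^ (M + 1)) = 1 := by
    simp_rw [pow_mul]
    exact tsum_pow_mul_one_sub_of_constantCoeff_eq_zero (by simp)
  have h2 := powerSeriesMk_boundedPartitionCount (M + 1)
  rw [prod_range_succ, ← powerSeriesMk_boundedPartitionCount] at h2
  rw [← sub_eq_iff_eq_add, h2]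
  linear_combination (PowerSeries.mk (fun n ↦ (boundedPartitionCount M n : ℝ))) * h

lemma boundedPartitionCount_succ (M n : ℕ) :
    (boundedPartitionCount (M + 1) n : ℝ) = boundedPartitionCount M n +
      if M + 1 ≤ n then (boundedPartitionCount (M + 1) (n - (M + 1)) : ℝ) else 0 := by
  have h := congrArg (PowerSeries.coeff n) (powerSeriesMk_boundedPartitionCount_succ M)
  simpa [PowerSeries.coeff_mul_X_pow'] using h

lemma boundedPartitionCount_zero (n : ℕ) : boundedPartitionCount 0 n = if n = 0 then 1 else 0 := by
  have h := congrArg (PowerSeries.coeff n) (powerSeriesMk_boundedPartitionCount 0)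
  simp only [PowerSeries.coeff_mk, range_zero, prod_empty, PowerSeries.coeff_one] at h
  split_ifs at * <;> exact_mod_cast h

lemma boundedPartitionCount_of_le {M n : ℕ} (h : n ≤ M) :
    boundedPartitionCount M n = Fintype.card n.Partition := by
  unfold boundedPartitionCount Nat.Partition.restricted
  rw [filter_true_of_mem, card_univ]
  intro x _ i hi
  exact (Nat.Partition.le_of_mem_parts hi).trans h

lemma boundedPartitionCount_le (M n : ℕ) :
    boundedPartitionCount M n ≤ Fintype.card n.Partition := by
  unfold boundedPartitionCount
  exact card_le_univ _

lemma sum_shift_pow_le {c : ℕ → ℝ} (hc : ∀ n, 0 ≤ c n) {x : ℝ} (hx : 0 ≤ x) (k N : ℕ) :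
    ∑ n ∈ range N, (if k ≤ n then c (n - k) else 0) * x ^ n ≤
      x ^ k * ∑ n ∈ range N, c n * x ^ n := by
  rw [mul_sum]
  calc ∑ n ∈ range N, (if k ≤ n then c (n - k) else 0) * x ^ n
      = ∑ n ∈ range N with k ≤ n, x ^ k * (c (n - k) * x ^ (n - k)) := by
        rw [sum_filter]
        refine sum_congr rfl fun n _ ↦ ?_
        split_ifs with h
        · have h1 : x ^ n = x ^ k * x ^ (n - k) := by rw [← pow_add, Nat.add_sub_cancel' h]
          rw [h1]
          ring
        · simp
    _ = ∑ n ∈ ((range N).filter (k ≤ ·)).image (· - k), x ^ k * (c n * x ^ n) := by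
        rw [sum_image]
        intro a ha b hb hab
        simp at ha hb hab
        omega
    _ ≤ _ := by
        refine sum_le_sum_of_subset_of_nonneg ?_ fun n _ _ ↦ ?_
        · intro n hn
          simp at hn ⊢
          omega
        · have := hc n
          positivity

lemma sum_boundedPartitionCount_le {x : ℝ} (hx : 0 ≤ x) (hx1 : x < 1) (M N : ℕ) :
    ∑ n ∈ range N, (boundedPartitionCount M n : ℝ) * x ^ n ≤ ∏ i ∈ range M, (1 - x ^ (i + 1))⁻¹ := by
  induction M with
  | zero =>
    simp only [boundedPartitionCount_zero, range_zero, prod_empty]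
    push_cast
    simp only [ite_mul, one_mul, zero_mul, sum_ite_eq', mem_range]
    split_ifs <;> simp
  | succ M ih =>
    have h1 : ∑ n ∈ range N, (boundedPartitionCount (M + 1) n : ℝ) * x ^ n ≤
        ∏ i ∈ range M, (1 - x ^ (i + 1))⁻¹ +
          x ^ (M + 1) * ∑ n ∈ range N, (boundedPartitionCount (M + 1) n : ℝ) * x ^ n := by
      have h2 := sum_shift_pow_le (c := fun n ↦ (boundedPartitionCount (M + 1) n : ℝ))
        (fun n ↦ by positivity) hx (M + 1) N
      calc _ = ∑ n ∈ range N, (boundedPartitionCount M n : ℝ) * x ^ n + ∑ n ∈ range N,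
            (if M + 1 ≤ n then (boundedPartitionCount (M + 1) (n - (M + 1)) : ℝ) else 0) * x ^ n := by
            rw [← sum_add_distrib]
            refine sum_congr rfl fun n _ ↦ ?_
            rw [← add_mul, ← boundedPartitionCount_succ]
        _ ≤ _ := add_le_add ih h2
    have h3 : 0 < 1 - x ^ (M + 1) := sub_pos.2 (pow_lt_one₀ hx hx1 (by omega))
    rw [prod_range_succ, ← div_eq_mul_inv, le_div_iff₀ h3]
    linarith

lemma one_sub_pow_ne_zero {q : ℂ} (hq : ‖q‖ < 1) (n : ℕ) : 1 - q ^ (n + 1) ≠ 0 := by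
  intro h
  have h1 : q ^ (n + 1) = 1 := by linear_combination -h
  have h2 := pow_lt_one₀ (norm_nonneg q) hq (Nat.succ_ne_zero n)
  rw [← norm_pow, Nat.succ_eq_add_one, h1] at h2
  simp at h2

lemma tprod_one_sub_pow_ne_zero {q : ℂ} (hq : ‖q‖ < 1) : ∏' n : ℕ, (1 - q ^ (n + 1)) ≠ 0 := by
  refine tprod_one_add_ne_zero_of_summable (f := fun n ↦ -q ^ (n + 1)) ?_ ?_
  · simpa [sub_eq_add_neg] using one_sub_pow_ne_zero hq
  · simpa using (summable_nat_add_iff 1).mpr (summable_geometric_of_lt_one (norm_nonneg _) hq)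

lemma tendsto_prod_one_sub_pow {q : ℂ} (hq : ‖q‖ < 1) :
    Tendsto (fun M ↦ ∏ i ∈ range M, (1 - q ^ (i + 1))) atTop
      (𝓝 (∏' n : ℕ, (1 - q ^ (n + 1)))) :=
  (ModularForm.multipliable_one_sub_pow hq).hasProd.tendsto_prod_nat

lemma summable_card_partition {x : ℝ} (hx : 0 ≤ x) (hx1 : x < 1) :
    Summable fun n ↦ (Fintype.card n.Partition : ℝ) * x ^ n := by
  have hlim : Tendsto (fun M ↦ ∏ i ∈ range M, (1 - x ^ (i + 1))⁻¹) atTop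
      (𝓝 (‖∏' n : ℕ, (1 - (x : ℂ) ^ (n + 1))‖)⁻¹) := by
    have hq : ‖(x : ℂ)‖ < 1 := by simpa [abs_of_nonneg hx] using hx1
    refine Tendsto.congr (fun M ↦ ?_) ((tendsto_prod_one_sub_pow hq).norm.inv₀
      (norm_ne_zero_iff.2 (tprod_one_sub_pow_ne_zero hq)))
    rw [prod_inv_distrib, norm_prod]
    congr 1
    refine prod_congr rfl fun i _ ↦ ?_
    rw [← Complex.ofReal_pow, ← Complex.ofReal_one, ← Complex.ofReal_sub, Complex.norm_real,
      Real.norm_of_nonneg]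
    exact sub_nonneg.2 (pow_le_one₀ hx hx1.le)
  refine summable_of_sum_range_le (c := (‖∏' n : ℕ, (1 - (x : ℂ) ^ (n + 1))‖)⁻¹)
    (fun n ↦ by positivity) fun N ↦ ?_
  refine ge_of_tendsto hlim ?_
  filter_upwards [eventually_ge_atTop N] with M hM
  refine le_trans (le_of_eq ?_) (sum_boundedPartitionCount_le hx hx1 M N)
  refine sum_congr rfl fun n hn ↦ ?_
  rw [boundedPartitionCount_of_le ((mem_range.1 hn).le.trans hM)]

lemma summable_boundedPartitionCount {q : ℂ} (hq : ‖q‖ < 1) (M : ℕ) :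
    Summable fun n ↦ (boundedPartitionCount M n : ℂ) * q ^ n := by
  refine Summable.of_norm_bounded (summable_card_partition (norm_nonneg q) hq) fun n ↦ ?_
  rw [norm_mul, norm_pow, Complex.norm_natCast]
  have := boundedPartitionCount_le M n
  gcongr

lemma tsum_boundedPartitionCount {q : ℂ} (hq : ‖q‖ < 1) (M : ℕ) :
    ∑' n, (boundedPartitionCount M n : ℂ) * q ^ n = ∏ i ∈ range M, (1 - q ^ (i + 1))⁻¹ := by
  induction M with
  | zero =>
    rw [tsum_eq_single 0 (fun n hn ↦ by simp [boundedPartitionCount_zero, hn])]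
    simp [boundedPartitionCount_zero]
  | succ M ih =>
    have hne := one_sub_pow_ne_zero hq M
    have hs := summable_boundedPartitionCount hq (M + 1)
    have hs0 := summable_boundedPartitionCount hq M
    have hshift : HasSum (fun n ↦ (if M + 1 ≤ n then
        (boundedPartitionCount (M + 1) (n - (M + 1)) : ℂ) else 0) * q ^ n)
        (q ^ (M + 1) * ∑' n, (boundedPartitionCount (M + 1) n : ℂ) * q ^ n) := by
      rw [← hasSum_nat_add_iff' (M + 1), sum_eq_zero, sub_zero]
      · refine (hs.hasSum.mul_left (q ^ (M + 1))).congr_fun fun n ↦ ?_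
        simp [pow_add]
        ring
      · intro i hi
        rw [if_neg (by simpa using hi), zero_mul]
    have h3 := hs0.hasSum.add hshift
    have h4 : HasSum (fun n ↦ (boundedPartitionCount (M + 1) n : ℂ) * q ^ n) _ :=
      h3.congr_fun fun n ↦ by
        have := congrArg (fun t : ℝ ↦ (t : ℂ)) (boundedPartitionCount_succ M n)
        push_cast at this
        rw [← add_mul, this]
        split_ifs <;> simp
    have h5 := h4.tsum_eq
    rw [ih] at h5
    rw [prod_range_succ, ← div_eq_mul_inv, eq_div_iff hne]
    linear_combination h5

/-- Euler's product for the generating function of the partition numbers. -/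
lemma hasSum_card_partition {q : ℂ} (hq : ‖q‖ < 1) :
    HasSum (fun n ↦ (Fintype.card n.Partition : ℂ) * q ^ n) (∏' n : ℕ, (1 - q ^ (n + 1)))⁻¹ := by
  have hsum := summable_card_partition (norm_nonneg q) hq
  have h1 : Tendsto (fun M ↦ ∑' n, (boundedPartitionCount M n : ℂ) * q ^ n) atTop
      (𝓝 (∑' n, (Fintype.card n.Partition : ℂ) * q ^ n)) := by
    refine tendsto_tsum_of_dominated_convergence hsum (fun n ↦ ?_) (Eventually.of_forall fun M n ↦ ?_)
    · refine tendsto_const_nhds.congr' ?_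
      filter_upwards [eventually_ge_atTop n] with M hM
      rw [boundedPartitionCount_of_le hM]
    · rw [norm_mul, norm_pow, Complex.norm_natCast]
      have := boundedPartitionCount_le M n
      gcongr
  have h2 : Tendsto (fun M ↦ ∑' n, (boundedPartitionCount M n : ℂ) * q ^ n) atTop
      (𝓝 (∏' n : ℕ, (1 - q ^ (n + 1)))⁻¹) := by
    refine Tendsto.congr (fun M ↦ ?_) ((tendsto_prod_one_sub_pow hq).inv₀
      (tprod_one_sub_pow_ne_zero hq))
    rw [tsum_boundedPartitionCount hq, prod_inv_distrib]
  rw [← tendsto_nhds_unique h1 h2]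
  refine (Summable.of_norm_bounded hsum fun n ↦ ?_).hasSum
  rw [norm_mul, norm_pow, Complex.norm_natCast]

end GeneratingFunction

section EulerProduct

open Complex intervalIntegral

/-- Euler's function `∏ (1 - q ^ (n + 1))`. -/
noncomputable def eulerProduct (q : ℂ) : ℂ := ∏' n : ℕ, (1 - q ^ (n + 1))

lemma norm_exp_neg_lt_one {z : ℂ} (hz : 0 < z.re) : ‖cexp (-z)‖ < 1 := by
  rw [norm_exp]
  simpa using hz

lemma hasSum_eulerProduct_inv_exp {z : ℂ} (hz : 0 < z.re) (n : ℕ) :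
    HasSum (fun k : ℕ ↦ (Fintype.card k.Partition : ℂ) * cexp (((n : ℂ) - k) * z))
      ((eulerProduct (cexp (-z)))⁻¹ * cexp (n * z)) := by
  refine ((hasSum_card_partition (norm_exp_neg_lt_one hz)).mul_right (cexp (n * z))).congr_fun
    fun k ↦ ?_
  rw [mul_assoc, ← Complex.exp_nat_mul, ← Complex.exp_add]
  congr 2
  ring

lemma integral_exp_int_sub_mul (α : ℝ) (n k : ℕ) :
    ∫ θ in (-Real.pi)..Real.pi, cexp (((n : ℂ) - k) * (α + θ * I)) =
      if k = n then 2 * Real.pi else 0 := by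
  split_ifs with h
  · subst h
    simp
    ring
  · have hc : ((n : ℂ) - k) ≠ 0 := sub_ne_zero.2 (by exact_mod_cast Ne.symm h)
    have hcI : ((n : ℂ) - k) * I ≠ 0 := mul_ne_zero hc I_ne_zero
    have h1 : ∀ θ : ℝ, cexp (((n : ℂ) - k) * (α + θ * I)) =
        cexp (((n : ℂ) - k) * α) * cexp ((((n : ℂ) - k) * I) * θ) := by
      intro θ
      rw [← Complex.exp_add]
      congr 1
      ring
    simp_rw [h1]
    rw [intervalIntegral.integral_const_mul, integral_exp_mul_complex hcI]
    have h2 : cexp (((n : ℂ) - k) * I * (Real.pi : ℝ)) =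
        cexp (((n : ℂ) - k) * I * ((-Real.pi : ℝ) : ℂ)) := by
      rw [Complex.exp_eq_exp_iff_exists_int]
      refine ⟨(n : ℤ) - k, ?_⟩
      push_cast
      ring
    rw [h2]
    simp

lemma integral_eulerProduct_inv {α : ℝ} (hα : 0 < α) (n : ℕ) :
    ∫ θ in (-Real.pi)..Real.pi,
      (eulerProduct (cexp (-(α + θ * I))))⁻¹ * cexp (n * (α + θ * I)) =
      2 * Real.pi * Fintype.card n.Partition := by
  have h1 : HasSum (fun k : ℕ ↦ ∫ θ in (-Real.pi)..Real.pi,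
      (Fintype.card k.Partition : ℂ) * cexp (((n : ℂ) - k) * (α + θ * I)))
      (∫ θ in (-Real.pi)..Real.pi,
        (eulerProduct (cexp (-(α + θ * I))))⁻¹ * cexp (n * (α + θ * I))) := by
    refine intervalIntegral.hasSum_integral_of_dominated_convergence
      (fun k _ ↦ (Fintype.card k.Partition : ℝ) * Real.exp (-α) ^ k * Real.exp (n * α))
      (fun k ↦ ?_) (fun k ↦ ?_) ?_ ?_ ?_
    · exact (Continuous.aestronglyMeasurable (by fun_prop))
    · refine Eventually.of_forall fun θ _ ↦ le_of_eq ?_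
      rw [norm_mul, Complex.norm_natCast, norm_exp, mul_assoc, ← Real.exp_nat_mul, ← Real.exp_add]
      congr 2
      simp
      ring
    · refine Eventually.of_forall fun θ _ ↦ ?_
      exact (summable_card_partition (Real.exp_pos _).le (by simpa using hα)).mul_right _
    · exact intervalIntegrable_const
    · refine Eventually.of_forall fun θ _ ↦ ?_
      exact hasSum_eulerProduct_inv_exp (by simpa using hα) n
  rw [← h1.tsum_eq, tsum_eq_single n]
  · rw [intervalIntegral.integral_const_mul, integral_exp_int_sub_mul, if_pos rfl]
    push_cast
    ring
  · intro k hk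
    rw [intervalIntegral.integral_const_mul, integral_exp_int_sub_mul, if_neg hk, ofReal_zero, mul_zero]

lemma one_sub_norm_mul_exp_le {w : ℂ} (hw : ‖w‖ < 1) :
    (1 - ‖w‖) * Real.exp (‖w‖ - w.re) ≤ ‖1 - w‖ := by
  have h1 : HasSum (fun n : ℕ ↦ (w ^ n / n).re) (-log (1 - w)).re :=
    Complex.hasSum_re (hasSum_taylorSeries_neg_log hw)
  have h2 : HasSum (fun n : ℕ ↦ ((‖w‖ : ℂ) ^ n / n).re) (-log (1 - (‖w‖ : ℂ))).re :=
    Complex.hasSum_re (hasSum_taylorSeries_neg_log (by simpa using hw))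
  have h3 := (h2.sub h1)
  have h4 := le_hasSum h3 1 fun n _ ↦ ?_
  · have hne : 0 < ‖1 - w‖ := by
      rw [norm_pos_iff, sub_ne_zero]
      rintro rfl
      simp at hw
    have e1 : (log (1 - (‖w‖ : ℂ))).re = Real.log (1 - ‖w‖) := by
      rw [log_re, ← ofReal_one, ← ofReal_sub, norm_real, Real.norm_of_nonneg (by linarith)]
    simp only [pow_one, Nat.cast_one, div_one, neg_re, log_re (1 - w), ofReal_re, e1] at h4
    rw [← Real.exp_log (show 0 < 1 - ‖w‖ by linarith), ← Real.exp_add, ← Real.exp_log hne]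
    rw [Real.exp_le_exp]
    linarith
  · have e : ((‖w‖ : ℂ) ^ n / n).re = ‖w ^ n / n‖ := by
      rw [norm_div, norm_pow, Complex.norm_natCast]
      norm_cast
    rw [e, sub_nonneg]
    exact re_le_norm _

lemma norm_eulerProduct_ge {q : ℂ} (hq : ‖q‖ < 1) :
    ‖eulerProduct ‖q‖‖ * Real.exp (‖q‖ / (1 - ‖q‖) - (q / (1 - q)).re) ≤ ‖eulerProduct q‖ := by
  have hq' : ‖(‖q‖ : ℂ)‖ < 1 := by simpa using hq
  have hgeo : HasSum (fun i : ℕ ↦ ‖q‖ ^ (i + 1) - (q ^ (i + 1)).re)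
      (‖q‖ / (1 - ‖q‖) - (q / (1 - q)).re) := by
    refine HasSum.sub ?_ (Complex.hasSum_re ?_)
    · simpa [pow_succ', div_eq_mul_inv] using
        (hasSum_geometric_of_lt_one (norm_nonneg q) hq).mul_left ‖q‖
    · simpa [pow_succ', div_eq_mul_inv] using
        (hasSum_geometric_of_norm_lt_one hq).mul_left q
  refine le_of_tendsto_of_tendsto' ((tendsto_prod_one_sub_pow hq').norm.mul
    ((Real.continuous_exp.tendsto _).comp hgeo.tendsto_sum_nat))
    (tendsto_prod_one_sub_pow hq).norm fun M ↦ ?_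
  rw [Function.comp_apply, Real.exp_sum, norm_prod, norm_prod, ← prod_mul_distrib]
  refine prod_le_prod (fun i _ ↦ by positivity) fun i _ ↦ ?_
  have h := one_sub_norm_mul_exp_le (w := q ^ (i + 1))
    (by rw [norm_pow]; exact pow_lt_one₀ (norm_nonneg q) hq (by omega))
  rw [norm_pow] at h
  refine le_of_eq_of_le ?_ h
  congr 1
  rw [← ofReal_pow, ← ofReal_one, ← ofReal_sub, norm_real, Real.norm_of_nonneg]
  exact sub_nonneg.2 (pow_le_one₀ (norm_nonneg q) hq.le)

lemma norm_eulerProduct_inv_le {q : ℂ} (hq : ‖q‖ < 1) :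
    ‖(eulerProduct q)⁻¹‖ ≤ ‖(eulerProduct ‖q‖)⁻¹‖ *
      Real.exp (‖q‖ / ‖1 - q‖ - ‖q‖ / (1 - ‖q‖)) := by
  have h := norm_eulerProduct_ge hq
  have hpos : 0 < ‖eulerProduct ‖q‖‖ :=
    norm_pos_iff.2 (tprod_one_sub_pow_ne_zero (by simpa using hq))
  have hre : (q / (1 - q)).re ≤ ‖q‖ / ‖1 - q‖ := by
    rw [← norm_div]
    exact re_le_norm _
  rw [norm_inv, norm_inv, ← neg_sub, Real.exp_neg, ← mul_inv]
  refine inv_anti₀ (by positivity) (le_trans ?_ h)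
  gcongr

/-- The modular inversion formula for Euler's function. -/
lemma eulerProduct_inv_exp_neg {z : ℂ} (hz : 0 < z.re) :
    (eulerProduct (cexp (-z)))⁻¹ = (z / (2 * Real.pi)) ^ (2⁻¹ : ℂ) *
      cexp (Real.pi ^ 2 / (6 * z) - z / 24) * (eulerProduct (cexp (-(4 * Real.pi ^ 2 / z))))⁻¹ := by
  have hz0 : z ≠ 0 := by rintro rfl; simp at hz
  have hpi : (Real.pi : ℂ) ≠ 0 := by exact_mod_cast Real.pi_ne_zero
  set τ : ℂ := z / (2 * Real.pi) * I with hτ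
  have hx0 : z / (2 * Real.pi) ≠ 0 := div_ne_zero hz0 (mul_ne_zero two_ne_zero hpi)
  have hxre : 0 < (z / (2 * Real.pi)).re := by
    have : z / (2 * Real.pi) = ((2 * Real.pi)⁻¹ : ℝ) * z := by push_cast; ring
    rw [this, re_ofReal_mul]
    have := Real.pi_pos
    positivity
  have hτmem : τ ∈ UpperHalfPlane.upperHalfPlaneSet := by
    change 0 < τ.im
    simpa [hτ] using hxre
  have key := ModularForm.eta_comp_eq_csqrt_I_inv hτmem
  simp only [Function.comp_apply, Pi.smul_apply, Pi.mul_apply, smul_eq_mul] at key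
  have e1 : ∀ t : ℂ, ModularForm.eta t = cexp (2 * Real.pi * I * t / 24) *
      eulerProduct (cexp (2 * Real.pi * I * t)) := by
    intro t
    simp only [ModularForm.eta, eulerProduct, ModularForm.eta_q_eq_pow, Function.Periodic.qParam]
    norm_num
  have e2 : 2 * Real.pi * I * τ = -z := by
    rw [hτ]
    field_simp
    rw [I_sq]
  have e3 : 2 * Real.pi * I * (-1 / τ) = -(4 * Real.pi ^ 2 / z) := by
    rw [hτ]
    field_simp
    ring
  have e4 : Complex.sqrt τ = (z / (2 * Real.pi)) ^ (2⁻¹ : ℂ) * Complex.sqrt I := by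
    unfold Complex.sqrt
    rw [hτ]
    have harg := abs_lt.1 (abs_arg_lt_pi_div_two_iff.2 (Or.inl hxre))
    rw [cpow_def_of_ne_zero (mul_ne_zero hx0 I_ne_zero), cpow_def_of_ne_zero hx0,
      cpow_def_of_ne_zero I_ne_zero, ← Complex.exp_add, ← add_mul,
      (log_mul_eq_add_log_iff hx0 I_ne_zero).2]
    rw [arg_I]
    constructor <;> linarith [Real.pi_pos]
  have hsI : Complex.sqrt I ≠ 0 := by
    unfold Complex.sqrt
    simp
  rw [e1, e1, e2, e3, e4] at key
  have hE : eulerProduct (cexp (-z)) ≠ 0 := tprod_one_sub_pow_ne_zero (norm_exp_neg_lt_one hz)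
  have hE' : eulerProduct (cexp (-(4 * Real.pi ^ 2 / z))) ≠ 0 := by
    refine tprod_one_sub_pow_ne_zero (norm_exp_neg_lt_one ?_)
    have h1 : 4 * Real.pi ^ 2 / z = ((4 * Real.pi ^ 2 : ℝ) : ℂ) * z⁻¹ := by
      push_cast
      rw [div_eq_mul_inv]
    rw [h1, re_ofReal_mul, inv_re]
    have h2 : 0 < normSq z := normSq_pos.2 hz0
    have := Real.pi_pos
    positivity
  have e5 : cexp (Real.pi ^ 2 / (6 * z) - z / 24) * cexp (-(4 * Real.pi ^ 2 / z) / 24) =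
      cexp (-z / 24) := by
    rw [← Complex.exp_add]
    congr 1
    field_simp
    ring
  rw [← e5] at key
  field_simp at key ⊢
  linear_combination key

lemma eulerProduct_inv_sub_one_isBigO :
    (fun q ↦ (eulerProduct q)⁻¹ - 1) =O[𝓝 0] (fun q : ℂ ↦ q) := by
  have h0 : eulerProduct 0 = 1 := by simp [eulerProduct]
  have hd : DifferentiableAt ℂ (fun q ↦ (eulerProduct q)⁻¹) 0 := by
    refine DifferentiableAt.inv ?_ (by simp [h0])
    exact (ModularForm.differentiableOn_tprod_one_sub_pow 0 (by simp)).differentiableAt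
      (Metric.ball_mem_nhds _ one_pos)
  simpa [h0] using hd.isBigO_sub

end EulerProduct

section SaddlePoint

open MeasureTheory

lemma integral_one_sub_sq_mul_gaussian {b : ℝ} (hb : 0 < b) :
    ∫ s in (-1 : ℝ)..1, (1 - s ^ 2) * Real.exp (-b * s ^ 2) =
      (1 - 1 / (2 * b)) * (∫ s in (-1 : ℝ)..1, Real.exp (-b * s ^ 2)) + Real.exp (-b) / b := by
  have h1 : ∀ s ∈ Set.uIcc (-1 : ℝ) 1, HasDerivAt (fun s : ℝ ↦ s * Real.exp (-b * s ^ 2))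
      ((1 - 2 * b * s ^ 2) * Real.exp (-b * s ^ 2)) s := by
    intro s _
    have h := (hasDerivAt_id s).mul (((hasDerivAt_pow 2 s).const_mul (-b)).exp)
    convert! h using 1
    simp
    ring
  have h2 := intervalIntegral.integral_eq_sub_of_hasDerivAt h1
    (Continuous.intervalIntegrable (by fun_prop) _ _)
  have h3 : ∀ s : ℝ, (1 - s ^ 2) * Real.exp (-b * s ^ 2) =
      (1 - 1 / (2 * b)) * Real.exp (-b * s ^ 2) +
        1 / (2 * b) * ((1 - 2 * b * s ^ 2) * Real.exp (-b * s ^ 2)) := by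
    intro s
    field_simp
    ring
  simp_rw [h3]
  rw [intervalIntegral.integral_add (Continuous.intervalIntegrable (by fun_prop) _ _)
    (Continuous.intervalIntegrable (by fun_prop) _ _), intervalIntegral.integral_const_mul,
    intervalIntegral.integral_const_mul, h2]
  norm_num
  field_simp
  ring

lemma abs_integral_gaussian_sub_le {b : ℝ} (hb : 1 ≤ b) :
    |(∫ s in (-1 : ℝ)..1, Real.exp (-b * s ^ 2)) - √(Real.pi / b)| ≤
      √Real.pi * Real.exp (1 - b) := by
  have hfint := integrable_exp_neg_mul_sq (show 0 < b by linarith)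
  have h1int := integrable_exp_neg_mul_sq one_pos
  have hsplit := integral_add_compl (s := Set.Ioc (-1 : ℝ) 1) measurableSet_Ioc hfint
  rw [integral_gaussian] at hsplit
  rw [intervalIntegral.integral_of_le (by norm_num), ← hsplit, sub_add_cancel_left, abs_neg,
    abs_of_nonneg (integral_nonneg fun _ ↦ (Real.exp_pos _).le)]
  calc ∫ s in (Set.Ioc (-1 : ℝ) 1)ᶜ, Real.exp (-b * s ^ 2)
      ≤ ∫ s in (Set.Ioc (-1 : ℝ) 1)ᶜ, Real.exp (1 - b) * Real.exp (-1 * s ^ 2) := by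
        refine setIntegral_mono_on hfint.integrableOn (h1int.const_mul _).integrableOn
          measurableSet_Ioc.compl fun s hs ↦ ?_
        rw [← Real.exp_add, Real.exp_le_exp]
        have hs2 : 1 ≤ s ^ 2 := by
          rw [one_le_sq_iff_one_le_abs, le_abs]
          by_contra! h
          exact hs ⟨by linarith, by linarith⟩
        nlinarith
    _ ≤ ∫ s, Real.exp (1 - b) * Real.exp (-1 * s ^ 2) :=
        setIntegral_le_integral (h1int.const_mul _) (Eventually.of_forall fun _ ↦ by positivity)
    _ = _ := by
        rw [integral_const_mul, integral_gaussian, div_one, mul_comm]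

lemma abs_integral_one_sub_sq_mul_gaussian_sub_le {b : ℝ} (hb : 1 ≤ b) :
    |(∫ s in (-1 : ℝ)..1, (1 - s ^ 2) * Real.exp (-b * s ^ 2)) -
      √(Real.pi / b) * (1 - 1 / (2 * b))| ≤ (√Real.pi + 1) * Real.exp (1 - b) := by
  have h := abs_integral_gaussian_sub_le hb
  rw [integral_one_sub_sq_mul_gaussian (by linarith)]
  have hb0 : 0 < b := by linarith
  have h1 : |1 - 1 / (2 * b)| ≤ 1 := by
    have : 1 / (2 * b) ≤ 1 := by
      rw [div_le_one (by positivity)]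
      linarith
    have h0 : 0 < 1 / (2 * b) := by positivity
    rw [abs_le]
    constructor <;> linarith
  have h2 : |Real.exp (-b) / b| ≤ Real.exp (1 - b) := by
    rw [abs_of_nonneg (by positivity)]
    calc Real.exp (-b) / b ≤ Real.exp (-b) := div_le_self (Real.exp_pos _).le hb
      _ ≤ _ := Real.exp_le_exp.2 (by linarith)
  calc _ = |(1 - 1 / (2 * b)) * ((∫ s in (-1 : ℝ)..1, Real.exp (-b * s ^ 2)) - √(Real.pi / b)) +
        Real.exp (-b) / b| := by
        congr 1
        ring
    _ ≤ |1 - 1 / (2 * b)| * |(∫ s in (-1 : ℝ)..1, Real.exp (-b * s ^ 2)) - √(Real.pi / b)| +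
        |Real.exp (-b) / b| := by
        rw [← abs_mul]
        exact abs_add_le _ _
    _ ≤ 1 * (√Real.pi * Real.exp (1 - b)) + Real.exp (1 - b) := by gcongr
    _ = _ := by ring

open Complex

/-- The integrand of the saddle point integral for the partition numbers. -/
noncomputable def saddleKernel (b : ℝ) (w : ℂ) : ℂ := w ^ (2⁻¹ : ℂ) * cexp (b * (w + w⁻¹))

lemma re_pos_of_mem_ball {w : ℂ} (hw : w ∈ Metric.ball (2 : ℂ) 2) : 0 < w.re := by
  rw [mem_ball_iff_norm] at hw
  have h := (abs_le.1 (abs_re_le_norm (w - 2))).1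
  simp at h
  linarith

lemma differentiableOn_saddleKernel (b : ℝ) :
    DifferentiableOn ℂ (saddleKernel b) (Metric.ball (2 : ℂ) 2) := by
  intro w hw
  have hre := re_pos_of_mem_ball hw
  have h0 : w ≠ 0 := by rintro rfl; simp at hre
  refine DifferentiableAt.differentiableWithinAt ?_
  unfold saddleKernel
  refine DifferentiableAt.mul ?_ ?_
  · exact differentiableAt_id.cpow_const (Or.inl hre)
  · exact ((differentiableAt_id.add (differentiableAt_id.inv h0)).const_mul _).cexp

lemma norm_cpow_two_inv_sq (w : ℂ) : ‖w ^ (2⁻¹ : ℂ)‖ ^ 2 = ‖w‖ := by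
  rw [← norm_pow]
  have := cpow_nat_inv_pow w two_ne_zero
  push_cast at this
  rw [this]

lemma re_add_inv (w : ℂ) : (w + w⁻¹).re = w.re + w.re / (w.re ^ 2 + w.im ^ 2) := by
  rw [add_re, inv_re, normSq_apply, sq, sq]

lemma norm_saddleKernel (b : ℝ) (w : ℂ) :
    ‖saddleKernel b w‖ = ‖w ^ (2⁻¹ : ℂ)‖ *
      Real.exp (b * (w.re + w.re / (w.re ^ 2 + w.im ^ 2))) := by
  rw [saddleKernel, norm_mul, norm_exp, re_ofReal_mul, re_add_inv]

/-- The parametrisation `s ↦ ((√(4 - s ^ 2) + i s) / 2) ^ 2` of an arc of the unit circle. -/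
noncomputable def saddleArc (s : ℝ) : ℂ := (((√(4 - s ^ 2) : ℝ) + s * I) / 2) ^ 2

lemma saddleArc_re_im (s : ℝ) (hs : |s| ≤ 1) :
    (saddleArc s).re = 1 - s ^ 2 / 2 ∧ (saddleArc s).im = √(4 - s ^ 2) * s / 2 := by
  have h4 : √(4 - s ^ 2) ^ 2 = 4 - s ^ 2 := Real.sq_sqrt (by nlinarith [abs_le.1 hs])
  have : saddleArc s = ((1 - s ^ 2 / 2 : ℝ) : ℂ) + ((√(4 - s ^ 2) * s / 2 : ℝ) : ℂ) * I := by
    have h4' : ((√(4 - s ^ 2) : ℝ) : ℂ) ^ 2 = 4 - s ^ 2 := by exact_mod_cast h4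
    unfold saddleArc
    push_cast
    linear_combination (1 / 4) * h4' + s ^ 2 / 4 * I_sq
  rw [this]
  constructor
  · rw [add_re, ofReal_re, re_ofReal_mul, I_re, mul_zero, add_zero]
  · rw [add_im, ofReal_im, im_ofReal_mul, I_im, mul_one, zero_add]

lemma saddleArc_mem_ball {s : ℝ} (hs : |s| ≤ 1) : saddleArc s ∈ Metric.ball (2 : ℂ) 2 := by
  obtain ⟨h1, h2⟩ := saddleArc_re_im s hs
  have hs2 : s ^ 2 ≤ 1 := (sq_le_one_iff_abs_le_one s).2 hs
  have h4 : √(4 - s ^ 2) ^ 2 = 4 - s ^ 2 := Real.sq_sqrt (by linarith)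
  rw [mem_ball_iff_norm, ← abs_of_pos (zero_lt_two' ℝ), ← abs_of_nonneg (norm_nonneg _),
    ← sq_lt_sq, Complex.sq_norm, normSq_apply]
  simp only [sub_re, sub_im, h1, h2]
  norm_num
  nlinarith

lemma hasDerivAt_saddleArc {s : ℝ} (hs : |s| ≤ 1) :
    HasDerivAt saddleArc (2 * I * saddleArc s / (√(4 - s ^ 2) : ℝ)) s := by
  have hs2 : s ^ 2 ≤ 1 := (sq_le_one_iff_abs_le_one s).2 hs
  have hpos : 0 < √(4 - s ^ 2) := Real.sqrt_pos.2 (by linarith)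
  have h1 : HasDerivAt (fun s : ℝ ↦ √(4 - s ^ 2)) (-(2 * s) / (2 * √(4 - s ^ 2))) s := by
    have := ((hasDerivAt_pow 2 s).const_sub 4).sqrt (by linarith)
    simpa using this
  have h2 := (((h1.ofReal_comp.add ((hasDerivAt_id s).ofReal_comp.mul_const I)).div_const 2).pow 2)
  unfold saddleArc
  convert! h2 using 1
  have hne : ((√(4 - s ^ 2) : ℝ) : ℂ) ≠ 0 := by exact_mod_cast hpos.ne'
  push_cast
  simp
  field_simp
  linear_combination (s * ((√(4 - s ^ 2) : ℝ) : ℂ) + s ^ 2 * I) * I_sq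

lemma im_saddleKernel_mul_deriv (b : ℝ) {s : ℝ} (hs : |s| ≤ 1) :
    (saddleKernel b (saddleArc s) * (2 * I * saddleArc s / (√(4 - s ^ 2) : ℝ))).im =
      Real.exp (2 * b) * ((1 - s ^ 2) * Real.exp (-b * s ^ 2)) := by
  have hs2 : s ^ 2 ≤ 1 := (sq_le_one_iff_abs_le_one s).2 hs
  have hpos : 0 < √(4 - s ^ 2) := Real.sqrt_pos.2 (by linarith)
  have h4 : √(4 - s ^ 2) ^ 2 = 4 - s ^ 2 := Real.sq_sqrt (by linarith)
  set t := √(4 - s ^ 2) with ht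
  have h4' : (t : ℂ) ^ 2 = 4 - s ^ 2 := by exact_mod_cast h4
  have hne : (t : ℂ) ≠ 0 := by exact_mod_cast hpos.ne'
  have hA : saddleArc s = ((t + s * I) / 2) ^ 2 := rfl
  have hroot : saddleArc s ^ (2⁻¹ : ℂ) = (t + s * I) / 2 := by
    rw [hA, sq_cpow_two_inv]
    simpa using hpos
  have hinv : (saddleArc s)⁻¹ = ((t - s * I) / 2) ^ 2 := by
    refine inv_eq_of_mul_eq_one_right ?_
    have : ((t : ℂ) + s * I) / 2 * ((t - s * I) / 2) = 1 := by
      linear_combination (1 / 4) * h4' - s ^ 2 / 4 * I_sq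
    rw [hA, ← mul_pow, this, one_pow]
  have hexp : cexp (b * (saddleArc s + (saddleArc s)⁻¹)) =
      ((Real.exp (2 * b) * Real.exp (-b * s ^ 2) : ℝ) : ℂ) := by
    rw [← Real.exp_add, ofReal_exp, hinv, hA]
    congr 1
    push_cast
    linear_combination (b / 2) * h4' + b * s ^ 2 / 2 * I_sq
  have hmul : saddleKernel b (saddleArc s) * (2 * I * saddleArc s / (t : ℝ)) =
      ((Real.exp (2 * b) * Real.exp (-b * s ^ 2) : ℝ) : ℂ) *
        (((1 - s ^ 2 : ℝ) : ℂ) * I + ((-(s * (3 - s ^ 2) / t) : ℝ) : ℂ)) := by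
    have hcube : ((t : ℂ) + s * I) ^ 3 = 4 * t * (1 - s ^ 2) + 4 * s * (3 - s ^ 2) * I := by
      linear_combination ((t : ℂ) + 3 * s * I) * h4' + (3 * t * s ^ 2 + s ^ 3 * I) * I_sq
    rw [saddleKernel, hroot, hexp, hA]
    generalize ((Real.exp (2 * b) * Real.exp (-b * s ^ 2) : ℝ) : ℂ) = E
    calc _ = E * (I * ((t : ℂ) + s * I) ^ 3 / (4 * t)) := by
          field_simp
          ring
      _ = _ := by
          rw [hcube]
          push_cast
          field_simp
          linear_combination E * (s * (3 - s ^ 2) : ℂ) * I_sq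
  rw [hmul, im_ofReal_mul, add_im, im_ofReal_mul, ofReal_im, I_im]
  ring

/-- The saddle point integral along the vertical segment through `1`, up to exponentially smaller
terms. -/
lemma abs_re_integral_saddleKernel_sub_le {b : ℝ} (hb : 0 ≤ b) :
    |(∫ s in (-(√3 / 2))..(√3 / 2), saddleKernel b (1 + s * I)).re -
      Real.exp (2 * b) * ∫ s in (-1 : ℝ)..1, (1 - s ^ 2) * Real.exp (-b * s ^ 2)| ≤
      4 * Real.exp (7 / 4 * b) := by
  obtain ⟨H, hH⟩ := (differentiableOn_saddleKernel b).isExactOn_ball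
  have h3 : √3 ^ 2 = (3 : ℝ) := Real.sq_sqrt (by norm_num)
  have h3pos : 0 < √(3 : ℝ) := by positivity
  have hmem : ∀ x y : ℝ, 1 / 2 ≤ x → x ≤ 1 → |y| ≤ √3 / 2 →
      (x + y * I : ℂ) ∈ Metric.ball (2 : ℂ) 2 := by
    intro x y hx hx1 hy
    have hy2 : y ^ 2 ≤ 3 / 4 := by
      have := sq_le_sq' (abs_le.1 hy).1 (abs_le.1 hy).2
      nlinarith
    rw [mem_ball_iff_norm, ← abs_of_pos (zero_lt_two' ℝ), ← abs_of_nonneg (norm_nonneg _),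
      ← sq_lt_sq, Complex.sq_norm, normSq_apply]
    simp
    nlinarith
  have hvert : I * ∫ s in (-(√3 / 2))..(√3 / 2), saddleKernel b (1 + s * I) =
      H (1 + (√3 / 2 : ℝ) * I) - H (1 + (-(√3 / 2) : ℝ) * I) := by
    have hmem1 : ∀ s ∈ Set.uIcc (-(√3 / 2)) (√3 / 2), (1 + s * I : ℂ) ∈ Metric.ball (2 : ℂ) 2 := by
      intro s hs
      rw [Set.uIcc_of_le (by linarith)] at hs
      simpa using hmem 1 s (by norm_num) le_rfl (abs_le.2 hs)
    rw [← intervalIntegral.integral_const_mul]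
    refine intervalIntegral.integral_eq_sub_of_hasDerivAt (f := fun s : ℝ ↦ H (1 + s * I))
      (fun s hs ↦ ?_) ?_
    · have hd : HasDerivAt (fun s : ℝ ↦ (1 + s * I : ℂ)) I s := by
        simpa using ((hasDerivAt_id s).ofReal_comp.mul_const I).const_add 1
      have := (hH _ (hmem1 s hs)).scomp s hd
      simpa using! this
    · refine ContinuousOn.intervalIntegrable (continuousOn_const.mul ?_)
      exact (differentiableOn_saddleKernel b).continuousOn.comp (by fun_prop) hmem1
  have harc : (H (saddleArc 1)).im - (H (saddleArc (-1))).im =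
      Real.exp (2 * b) * ∫ s in (-1 : ℝ)..1, (1 - s ^ 2) * Real.exp (-b * s ^ 2) := by
    rw [← intervalIntegral.integral_const_mul]
    refine (intervalIntegral.integral_eq_sub_of_hasDerivAt (f := fun s : ℝ ↦ (H (saddleArc s)).im)
      (fun s hs ↦ ?_) (Continuous.intervalIntegrable (by fun_prop) _ _)).symm
    rw [Set.uIcc_of_le (by norm_num)] at hs
    have hs1 : |s| ≤ 1 := abs_le.2 hs
    have hd := (hH _ (saddleArc_mem_ball hs1)).scomp s (hasDerivAt_saddleArc hs1)
    have := imCLM.hasFDerivAt.comp_hasDerivAt s hd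
    rw [← im_saddleKernel_mul_deriv b hs1]
    simpa [mul_comm] using! this
  have hhor : ∀ y : ℝ, y ^ 2 = 3 / 4 →
      ‖H (1 + y * I) - H ((1 / 2 : ℝ) + y * I)‖ ≤ 2 * Real.exp (7 / 4 * b) := by
    intro y hy
    have hyabs : |y| ≤ √3 / 2 := by
      refine abs_le_of_sq_le_sq ?_ (by positivity)
      nlinarith
    have hd : ∀ x ∈ Set.Icc (1 / 2 : ℝ) 1, HasDerivWithinAt (fun x : ℝ ↦ H (x + y * I))
        (saddleKernel b (x + y * I)) (Set.Icc (1 / 2 : ℝ) 1) x := by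
      intro x hx
      have hd : HasDerivAt (fun x : ℝ ↦ (x + y * I : ℂ)) 1 x := by
        simpa using (hasDerivAt_id x).ofReal_comp.add_const (y * I : ℂ)
      have := (hH _ (hmem x y hx.1 hx.2 hyabs)).scomp x hd
      simpa using! this.hasDerivWithinAt
    have hbd : ∀ x ∈ Set.Icc (1 / 2 : ℝ) 1,
        ‖saddleKernel b (x + y * I)‖ ≤ 2 * Real.exp (7 / 4 * b) := by
      intro x hx
      rw [norm_saddleKernel]
      refine mul_le_mul ?_ (Real.exp_le_exp.2 ?_) (Real.exp_pos _).le zero_le_two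
      · have hsq := norm_cpow_two_inv_sq (x + y * I)
        have hle : ‖(x + y * I : ℂ)‖ ≤ 4 := by
          have := (mem_ball_iff_norm.1 (hmem x y hx.1 hx.2 hyabs)).le
          calc ‖(x + y * I : ℂ)‖ = ‖((x + y * I : ℂ) - 2) + 2‖ := by ring_nf
            _ ≤ ‖(x + y * I : ℂ) - 2‖ + ‖(2 : ℂ)‖ := norm_add_le _ _
            _ ≤ 4 := by
              rw [Complex.norm_two]
              linarith
        refine abs_le_of_sq_le_sq' ?_ zero_le_two |>.2
        linarith
      · rw [mul_comm (7 / 4 : ℝ) b]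
        refine mul_le_mul_of_nonneg_left ?_ hb
        simp only [add_re, ofReal_re, mul_re, I_re, mul_zero, ofReal_im, I_im, mul_one, sub_self,
          add_zero, add_im, mul_im, zero_add, hy]
        have hx1 := hx.1
        have hx2 := hx.2
        have hden : 0 < x ^ 2 + 3 / 4 := by positivity
        have : x / (x ^ 2 + 3 / 4) ≤ 7 / 4 - x := by
          rw [div_le_iff₀ hden]
          nlinarith [sq_nonneg (x - 1), sq_nonneg (x - 1 / 2),
            mul_nonneg (sub_nonneg.2 hx1) (sub_nonneg.2 hx2)]
        linarith
    have := (convex_Icc (1 / 2 : ℝ) 1).norm_image_sub_le_of_norm_hasDerivWithin_le hd hbd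
      (x := 1 / 2) (y := 1) (by norm_num) (by norm_num)
    simp only [ofReal_one] at this
    refine this.trans ?_
    norm_num
    linarith [Real.exp_pos (7 / 4 * b)]
  have hend : ∀ s : ℝ, s ^ 2 = 1 → saddleArc s = (1 / 2 : ℝ) + (s * (√3 / 2) : ℝ) * I := by
    intro s hs
    have h := saddleArc_re_im s ((sq_le_one_iff_abs_le_one s).1 hs.le)
    rw [hs] at h
    apply Complex.ext
    · rw [h.1]
      simp
      norm_num
    · rw [h.2]
      simp
      norm_num
      ring
  have hre : (∫ s in (-(√3 / 2))..(√3 / 2), saddleKernel b (1 + s * I)).re =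
      (H (1 + (√3 / 2 : ℝ) * I)).im - (H (1 + (-(√3 / 2) : ℝ) * I)).im := by
    rw [← sub_im, ← hvert, I_mul_im]
  rw [hre, ← harc, hend 1 (by norm_num), hend (-1) (by norm_num), one_mul, neg_one_mul]
  have b1 := hhor (√3 / 2) (by linarith [h3, show (√3 / 2 : ℝ) ^ 2 = √3 ^ 2 / 4 by ring])
  have b2 := hhor (-(√3 / 2)) (by linarith [h3, show (-(√3 / 2) : ℝ) ^ 2 = √3 ^ 2 / 4 by ring])
  have c1 := (abs_im_le_norm _).trans b1
  have c2 := (abs_im_le_norm _).trans b2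
  rw [sub_im, abs_le] at c1 c2
  rw [abs_le]
  constructor <;> linarith [c1.1, c1.2, c2.1, c2.2]

lemma exists_abs_re_integral_saddleKernel_sub_le : ∃ C : ℝ, 0 < C ∧ ∀ b : ℝ, 1 ≤ b →
    |(∫ s in (-(√3 / 2))..(√3 / 2), saddleKernel b (1 + s * I)).re -
      Real.exp (2 * b) * (√(Real.pi / b) * (1 - 1 / (2 * b)))| ≤ C * Real.exp (7 / 4 * b) := by
  refine ⟨4 + (√Real.pi + 1) * Real.exp 1, by positivity, fun b hb ↦ ?_⟩
  have h1 := abs_re_integral_saddleKernel_sub_le (b := b) (by linarith)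
  have h2 := abs_integral_one_sub_sq_mul_gaussian_sub_le hb
  have h3 := mul_le_mul_of_nonneg_left h2 (Real.exp_pos (2 * b)).le
  rw [← abs_of_pos (Real.exp_pos (2 * b)), ← abs_mul, abs_of_pos (Real.exp_pos (2 * b)),
    mul_sub] at h3
  have h4 : Real.exp (2 * b) * ((√Real.pi + 1) * Real.exp (1 - b)) ≤
      (√Real.pi + 1) * Real.exp 1 * Real.exp (7 / 4 * b) := by
    have : Real.exp (2 * b) * Real.exp (1 - b) ≤ Real.exp 1 * Real.exp (7 / 4 * b) := by
      rw [← Real.exp_add, ← Real.exp_add, Real.exp_le_exp]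
      linarith
    calc _ = (√Real.pi + 1) * (Real.exp (2 * b) * Real.exp (1 - b)) := by ring
      _ ≤ (√Real.pi + 1) * (Real.exp 1 * Real.exp (7 / 4 * b)) := by gcongr
      _ = _ := by ring
  refine (abs_sub_le _ _ _).trans ((add_le_add h1 (h3.trans h4)).trans (le_of_eq (by ring)))

end SaddlePoint

section PartitionAsymptotics

open Complex

lemma ofReal_mul_cpow_two_inv {a : ℝ} (ha : 0 < a) {w : ℂ} (hw : w ≠ 0) :
    ((a : ℂ) * w) ^ (2⁻¹ : ℂ) = (√a : ℝ) * w ^ (2⁻¹ : ℂ) := by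
  have ha0 : (a : ℂ) ≠ 0 := by exact_mod_cast ha.ne'
  have hsqrt : ((√a : ℝ) : ℂ) = (a : ℂ) ^ (2⁻¹ : ℂ) := by
    rw [Real.sqrt_eq_rpow, ofReal_cpow ha.le]
    norm_num
  rw [hsqrt, cpow_def_of_ne_zero (mul_ne_zero ha0 hw), cpow_def_of_ne_zero ha0,
    cpow_def_of_ne_zero hw, log_ofReal_mul ha hw, ← exp_add, ofReal_log ha.le]
  ring_nf

/-- Cauchy's integrand for the partition numbers on the scale of the saddle point. -/
lemma eulerProduct_inv_mul_exp_eq {α b : ℝ} {n : ℕ} (hα : 0 < α) (hb : α * b = Real.pi ^ 2 / 6)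
    (hn : α * (n - 1 / 24) = b) {w : ℂ} (hw : 0 < w.re) :
    (eulerProduct (cexp (-(α * w))))⁻¹ * cexp (n * (α * w)) =
      (√(α / (2 * Real.pi)) : ℝ) *
        (saddleKernel b w * (eulerProduct (cexp (-(24 * b * w⁻¹))))⁻¹) := by
  have hw0 : w ≠ 0 := by rintro rfl; simp at hw
  have hα0 : (α : ℂ) ≠ 0 := by exact_mod_cast hα.ne'
  have hb' : (α : ℂ) * b = Real.pi ^ 2 / 6 := by exact_mod_cast hb
  have hn' : (α : ℂ) * (n - 1 / 24) = b := by rw [← hn]; push_cast; ring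
  have hpi := Real.pi_pos
  rw [eulerProduct_inv_exp_neg (z := α * w) (by rw [re_ofReal_mul]; positivity)]
  have h1 : (α * w / (2 * Real.pi) : ℂ) = ((α / (2 * Real.pi) : ℝ) : ℂ) * w := by
    push_cast
    ring
  have h2 : (4 * Real.pi ^ 2 / (α * w) : ℂ) = 24 * b * w⁻¹ := by
    field_simp
    linear_combination (-24 : ℂ) * hb'
  have h3 : (Real.pi ^ 2 / (6 * (α * w)) - α * w / 24 + n * (α * w) : ℂ) = b * (w + w⁻¹) := by
    have : (Real.pi ^ 2 / (6 * (α * w)) : ℂ) = b * w⁻¹ := by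
      field_simp
      linear_combination (-6 : ℂ) * hb'
    rw [this]
    linear_combination w * hn'
  rw [h1, h2, ofReal_mul_cpow_two_inv (by positivity) hw0, saddleKernel, ← h3, exp_add]
  ring

lemma exists_norm_eulerProduct_inv_exp_sub_one_le : ∃ B : ℝ, 1 ≤ B ∧ ∀ b : ℝ, B ≤ b → ∀ v : ℂ,
    4 / 7 ≤ v.re → ‖(eulerProduct (cexp (-(24 * b * v))))⁻¹ - 1‖ ≤ Real.exp (-b) := by
  obtain ⟨c, hc⟩ := eulerProduct_inv_sub_one_isBigO.bound
  obtain ⟨ε, hε, hball⟩ := Metric.eventually_nhds_iff_ball.1 hc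
  have ht : ∀ k : ℝ, 0 < k → Tendsto (fun b : ℝ ↦ Real.exp (-(k * b))) atTop (𝓝 0) := fun k hk ↦
    Real.tendsto_exp_neg_atTop_nhds_zero.comp (tendsto_id.const_mul_atTop hk)
  have h1 := (ht 13 (by norm_num)).eventually_lt_const hε
  have h2 : ∀ᶠ b : ℝ in atTop, |c| * Real.exp (-(12 * b)) < 1 := by
    refine ((ht 12 (by norm_num)).const_mul |c|).eventually_lt_const ?_
    simp
  obtain ⟨B, hB⟩ := ((eventually_ge_atTop 1).and (h1.and h2)).exists_forall_of_atTop
  refine ⟨B, (hB B le_rfl).1, fun b hb v hv ↦ ?_⟩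
  obtain ⟨hb1, hb2, hb3⟩ := hB b hb
  have hq : ‖cexp (-(24 * b * v))‖ ≤ Real.exp (-(13 * b)) := by
    rw [norm_exp, Real.exp_le_exp]
    have : (-(24 * b * v) : ℂ).re = -(24 * b * v.re) := by
      rw [neg_re, show (24 * b * v : ℂ) = ((24 * b : ℝ) : ℂ) * v by push_cast; ring, re_ofReal_mul]
    rw [this]
    nlinarith
  refine (hball _ (by simpa using hq.trans_lt hb2)).trans ?_
  calc c * ‖cexp (-(24 * b * v))‖ ≤ |c| * Real.exp (-(13 * b)) := by
        gcongr
        exact le_abs_self c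
    _ = |c| * Real.exp (-(12 * b)) * Real.exp (-b) := by
        rw [mul_assoc, ← Real.exp_add]
        ring_nf
    _ ≤ Real.exp (-b) := mul_le_of_le_one_left (Real.exp_pos _).le hb3.le

lemma sq_le_of_abs_le_sqrt_three {s : ℝ} (hs : |s| ≤ √3 / 2) : s ^ 2 ≤ 3 / 4 := by
  have h3 : √3 ^ 2 = (3 : ℝ) := Real.sq_sqrt (by norm_num)
  have := sq_le_sq' (abs_le.1 hs).1 (abs_le.1 hs).2
  nlinarith

lemma inv_one_add_mul_I_re (s : ℝ) : ((1 + s * I : ℂ)⁻¹).re = 1 / (1 + s ^ 2) := by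
  rw [inv_re, normSq_apply]
  simp [sq]

lemma norm_saddleKernel_one_add_le {b s : ℝ} (hb : 0 ≤ b) (hs : |s| ≤ √3 / 2) :
    ‖saddleKernel b (1 + s * I)‖ ≤ 2 * Real.exp (2 * b) := by
  have hs2 := sq_le_of_abs_le_sqrt_three hs
  rw [saddleKernel, norm_mul, norm_exp]
  refine mul_le_mul ?_ (Real.exp_le_exp.2 ?_) (Real.exp_pos _).le zero_le_two
  · refine abs_le_of_sq_le_sq' ?_ zero_le_two |>.2
    rw [norm_cpow_two_inv_sq]
    refine abs_le_of_sq_le_sq' ?_ (by norm_num) |>.2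
    rw [Complex.sq_norm, normSq_apply]
    simp
    nlinarith
  · rw [re_ofReal_mul, add_re, inv_one_add_mul_I_re, mul_comm]
    gcongr
    have : 1 / (1 + s ^ 2) ≤ 1 := by
      rw [div_le_one (by positivity)]
      nlinarith
    simp
    linarith [one_div (1 + s ^ 2)]

/-- Away from the positive real axis the generating function is exponentially smaller than on it. -/
lemma norm_eulerProduct_inv_exp_le {α θ : ℝ} (hα : 0 < α) (hα1 : α ≤ 1 / 2)
    (hθ : √3 / 2 * α ≤ |θ|) (hθpi : |θ| ≤ Real.pi) :
    ‖(eulerProduct (cexp (-(α + θ * I))))⁻¹‖ ≤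
      ‖(eulerProduct (cexp (-α)))⁻¹‖ * Real.exp (-1 / (42 * α)) := by
  have hre : (α + θ * I : ℂ).re = α := by simp
  have hq := norm_exp_neg_lt_one (z := α + θ * I) (by rw [hre]; exact hα)
  have hnorm : ‖cexp (-(α + θ * I))‖ = Real.exp (-α) := by simp [norm_exp]
  refine (norm_eulerProduct_inv_le hq).trans ?_
  rw [hnorm, ofReal_exp, ofReal_neg]
  refine mul_le_mul_of_nonneg_left (Real.exp_le_exp.2 ?_) (norm_nonneg _)
  set ρ := Real.exp (-α) with hρ
  have hρ1 : ρ < 1 := by simpa [hρ] using hα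
  have hρα : 1 - α ≤ ρ := by linarith [Real.add_one_le_exp (-α)]
  have h1 : 21 / 20 * (1 - ρ) ≤ ‖1 - cexp (-(α + θ * I))‖ := by
    refine abs_le_of_sq_le_sq' ?_ (norm_nonneg _) |>.2
    have hexp : cexp (-(α + θ * I)) = ρ * (Real.cos θ - Real.sin θ * I) := by
      rw [neg_add, exp_add, hρ, ofReal_exp, ofReal_neg,
        show (-(θ * I) : ℂ) = ((-θ : ℝ) : ℂ) * I by push_cast; ring, exp_mul_I, ← ofReal_cos,
        ← ofReal_sin, Real.cos_neg, Real.sin_neg]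
      push_cast
      ring
    have hsq : ‖1 - cexp (-(α + θ * I))‖ ^ 2 = (1 - ρ) ^ 2 + 2 * ρ * (1 - Real.cos θ) := by
      rw [hexp, Complex.sq_norm, normSq_apply]
      simp only [sub_re, one_re, ofReal_re, mul_re, I_re, mul_zero, ofReal_im, I_im,
        mul_one, sub_self, sub_zero, sub_im, one_im, mul_im, add_zero, zero_sub]
      linear_combination ρ ^ 2 * Real.sin_sq_add_cos_sq θ
    have hcos : 2 / Real.pi ^ 2 * θ ^ 2 ≤ 1 - Real.cos θ := by
      linarith [Real.cos_le_one_sub_mul_cos_sq hθpi]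
    have hpi2 : Real.pi ^ 2 ≤ 10 := by nlinarith [Real.pi_lt_d2, Real.pi_pos]
    have hfrac : 1 / 5 ≤ 2 / Real.pi ^ 2 := by
      rw [div_le_div_iff₀ (by norm_num) (by positivity)]
      linarith
    have hθ2 : 3 / 4 * α ^ 2 ≤ θ ^ 2 := by
      have h3 : √3 ^ 2 = (3 : ℝ) := Real.sq_sqrt (by norm_num)
      have := pow_le_pow_left₀ (by positivity) hθ 2
      rw [sq_abs] at this
      nlinarith
    have hc2 : 3 / 20 * α ^ 2 ≤ 1 - Real.cos θ := by nlinarith [sq_nonneg θ]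
    rw [hsq]
    have hα2 : (1 - ρ) ^ 2 ≤ α ^ 2 := by nlinarith
    nlinarith
  have h2 : ρ / ‖1 - cexp (-(α + θ * I))‖ ≤ ρ / (21 / 20 * (1 - ρ)) := by
    have := Real.exp_pos (-α)
    have := sub_pos.2 hρ1
    gcongr
  have h3 : ρ / (21 / 20 * (1 - ρ)) - ρ / (1 - ρ) = -(ρ / (21 * (1 - ρ))) := by
    have := (sub_pos.2 hρ1).ne'
    field_simp
    ring
  have h4 : 1 / (42 * α) ≤ ρ / (21 * (1 - ρ)) := by
    have := sub_pos.2 hρ1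
    rw [div_le_div_iff₀ (by positivity) (by positivity)]
    nlinarith
  rw [neg_div]
  linarith

/-- The contribution of the saddle point to Cauchy's integral for the partition numbers. -/
lemma exists_abs_re_major_integral_sub_le : ∃ C B : ℝ, 0 ≤ C ∧ ∀ (α b : ℝ) (n : ℕ), 0 < α →
    α ≤ 1 / 2 → α * b = Real.pi ^ 2 / 6 → α * (n - 1 / 24) = b → B ≤ b →
    IntervalIntegrable (fun θ : ℝ ↦ (eulerProduct (cexp (-(α + θ * I))))⁻¹ *
      cexp (n * (α + θ * I))) MeasureTheory.volume (α * -(√3 / 2)) (α * (√3 / 2)) →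
    |(∫ θ in (α * -(√3 / 2))..(α * (√3 / 2)), (eulerProduct (cexp (-(α + θ * I))))⁻¹ *
      cexp (n * (α + θ * I))).re - Real.pi ^ 3 / (6 * √12) *
        (Real.exp (2 * b) / b ^ 2 * (1 - 1 / (2 * b)))| ≤ C * Real.exp (7 / 4 * b) := by
  obtain ⟨C, hC, hJ⟩ := exists_abs_re_integral_saddleKernel_sub_le
  obtain ⟨B, hB1, hB⟩ := exists_norm_eulerProduct_inv_exp_sub_one_le
  refine ⟨C + 4, B, by positivity, fun α b n hα hα1 hαb hn hb hfint ↦ ?_⟩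
  have hpi := Real.pi_pos
  have hb0 : 0 < b := by linarith
  set c : ℝ := √3 / 2 with hc
  have hc0 : 0 < c := by positivity
  set κ : ℝ := √(α / (2 * Real.pi)) with hκ
  have hκ1 : κ ≤ 1 := by
    refine Real.sqrt_le_one.2 ?_
    rw [div_le_one (by positivity)]
    linarith [Real.pi_gt_three]
  set f : ℝ → ℂ := fun θ ↦ (eulerProduct (cexp (-(α + θ * I))))⁻¹ * cexp (n * (α + θ * I)) with hf
  set J : ℝ → ℂ := fun s ↦ saddleKernel b (1 + s * I) with hJdef
  set R : ℝ → ℂ := fun s ↦ J s * ((eulerProduct (cexp (-(24 * b * (1 + s * I)⁻¹))))⁻¹ - 1) with hR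
  have hfJ : ∀ s : ℝ, f (α * s) = κ * (J s + R s) := by
    intro s
    have h := eulerProduct_inv_mul_exp_eq hα hαb hn (w := 1 + s * I) (by simp)
    have hz : (α + ((α * s : ℝ) : ℂ) * I : ℂ) = α * (1 + s * I) := by
      push_cast
      ring
    simp only [hf, hz, h, hJdef, hR]
    ring
  have hJint : IntervalIntegrable J MeasureTheory.volume (-c) c := by
    refine ContinuousOn.intervalIntegrable fun s _ ↦ ContinuousAt.continuousWithinAt ?_
    have hne : (1 + s * I : ℂ) ≠ 0 := fun h ↦ by simpa using congrArg re h
    simp only [hJdef, saddleKernel]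
    refine ContinuousAt.mul (ContinuousAt.cpow (by fun_prop) continuousAt_const (Or.inl (by simp)))
      (ContinuousAt.cexp (continuousAt_const.mul (ContinuousAt.add (by fun_prop)
        (ContinuousAt.inv₀ (by fun_prop) hne))))
  have hκ0 : 0 < κ := by positivity
  have hκ' : (κ : ℂ) ≠ 0 := by exact_mod_cast hκ0.ne'
  have hRint : IntervalIntegrable R MeasureTheory.volume (-c) c := by
    have h1 := hfint.comp_mul_left (c := α)
    rw [mul_div_cancel_left₀ _ hα.ne', mul_div_cancel_left₀ _ hα.ne'] at h1
    have h2 := (h1.const_mul ((κ : ℂ)⁻¹)).sub hJint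
    refine h2.congr fun s _ ↦ ?_
    change (κ : ℂ)⁻¹ * f (α * s) - J s = R s
    rw [hfJ, inv_mul_cancel_left₀ hκ', add_sub_cancel_left]
  have hM : ∫ θ in (α * -c)..(α * c), f θ =
      ((α * κ : ℝ) : ℂ) * ((∫ s in (-c)..c, J s) + ∫ s in (-c)..c, R s) := by
    rw [← intervalIntegral.smul_integral_comp_mul_left, real_smul]
    simp_rw [hfJ]
    rw [intervalIntegral.integral_const_mul, intervalIntegral.integral_add hJint hRint]
    push_cast
    ring
  have hRle : ‖∫ s in (-c)..c, R s‖ ≤ 4 * Real.exp (7 / 4 * b) := by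
    have hbd : ∀ s ∈ Set.uIoc (-c) c, ‖R s‖ ≤ 2 * Real.exp (2 * b) * Real.exp (-b) := by
      intro s hs
      rw [Set.uIoc_of_le (by linarith)] at hs
      have hs' : |s| ≤ √3 / 2 := abs_le.2 ⟨hs.1.le, hs.2⟩
      have hs2 := sq_le_of_abs_le_sqrt_three hs'
      rw [hR, norm_mul]
      refine mul_le_mul (norm_saddleKernel_one_add_le hb0.le hs') (hB b hb _ ?_) (norm_nonneg _)
        (by positivity)
      rw [inv_one_add_mul_I_re, div_le_div_iff₀ (by norm_num) (by positivity)]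
      linarith
    refine (intervalIntegral.norm_integral_le_of_norm_le_const hbd).trans ?_
    have h1 : |c - -c| ≤ 2 := by
      rw [abs_of_pos (by linarith), hc]
      nlinarith [Real.sqrt_le_sqrt (show (3 : ℝ) ≤ 4 by norm_num),
        show √(4 : ℝ) = 2 by rw [show (4 : ℝ) = 2 ^ 2 by norm_num]; exact Real.sqrt_sq (by norm_num)]
    have h2 : Real.exp (2 * b) * Real.exp (-b) ≤ Real.exp (7 / 4 * b) := by
      rw [← Real.exp_add, Real.exp_le_exp]
      linarith
    nlinarith [Real.exp_pos (2 * b), Real.exp_pos (-b), Real.exp_pos (7 / 4 * b),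
      mul_pos (Real.exp_pos (2 * b)) (Real.exp_pos (-b))]
  have hmain : Real.pi ^ 3 / (6 * √12) * (Real.exp (2 * b) / b ^ 2 * (1 - 1 / (2 * b))) =
      α * κ * (Real.exp (2 * b) * (√(Real.pi / b) * (1 - 1 / (2 * b)))) := by
    have h1 : κ * √(Real.pi / b) = Real.pi / (√12 * b) := by
      rw [hκ, ← Real.sqrt_mul (by positivity), ← Real.sqrt_sq (show 0 ≤ Real.pi / (√12 * b) by
        positivity)]
      congr 1
      rw [div_pow, mul_pow, Real.sq_sqrt (by norm_num)]
      field_simp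
      linear_combination 12 * hαb
    have h2 : α = Real.pi ^ 2 / 6 / b := by
      rw [← hαb]
      field_simp
    calc _ = Real.pi ^ 2 / 6 / b * (Real.pi / (√12 * b)) *
          (Real.exp (2 * b) * (1 - 1 / (2 * b))) := by
          field_simp
      _ = _ := by
          rw [← h1, ← h2]
          ring
  have hακ : α * κ ≤ 1 := by nlinarith
  rw [hM, re_ofReal_mul, hmain, ← mul_sub, abs_mul, abs_of_pos (by positivity)]
  refine (mul_le_of_le_one_left (abs_nonneg _) hακ).trans ?_
  rw [add_re, add_sub_right_comm, add_mul]
  exact (abs_add_le _ _).trans (add_le_add (hJ b (by linarith)) ((abs_re_le_norm _).trans hRle))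

/-- An asymptotic formula for the partition numbers with an exponentially small relative error. -/
theorem exists_abs_card_partition_sub_le : ∃ C B : ℝ, ∀ (n : ℕ) (b : ℝ),
    b = Real.pi * √((n - 1 / 24) / 6) → B ≤ b →
    |(Fintype.card n.Partition : ℝ) - Real.pi ^ 2 / (12 * √12) *
        (Real.exp (2 * b) / b ^ 2 * (1 - 1 / (2 * b)))| ≤ C * Real.exp (139 / 70 * b) := by
  obtain ⟨C, B₁, hC, hmajor⟩ := exists_abs_re_major_integral_sub_le
  obtain ⟨B₂, -, hB₂⟩ := exists_norm_eulerProduct_inv_exp_sub_one_le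
  refine ⟨C + 4 * Real.pi, max (max B₁ B₂) 4, fun n b hbdef hb ↦ ?_⟩
  obtain ⟨⟨hb₁, hb₂⟩, hb4⟩ : (B₁ ≤ b ∧ B₂ ≤ b) ∧ 4 ≤ b := by simpa using hb
  have hpi := Real.pi_pos
  have hpi2 : Real.pi ^ 2 ≤ 10 := by nlinarith [Real.pi_lt_d2]
  have hb0 : 0 < b := by linarith
  have hsqrt : 0 < √(((n : ℝ) - 1 / 24) / 6) := by
    by_contra! h
    nlinarith
  have hy := Real.sqrt_pos.1 hsqrt
  have hbsq : b ^ 2 = Real.pi ^ 2 * ((n - 1 / 24) / 6) := by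
    rw [hbdef, mul_pow, Real.sq_sqrt hy.le]
  set α : ℝ := Real.pi ^ 2 / (6 * b) with hαdef
  have hα : 0 < α := by positivity
  have hαb : α * b = Real.pi ^ 2 / 6 := by
    rw [hαdef]
    field_simp
  have hα1 : α ≤ 1 / 2 := by
    rw [hαdef, div_le_div_iff₀ (by positivity) (by norm_num)]
    linarith
  have hn : α * (n - 1 / 24) = b := by
    rw [hαdef, div_mul_eq_mul_div, div_eq_iff (by positivity)]
    linear_combination (-6 : ℝ) * hbsq
  set f : ℝ → ℂ := fun θ ↦ (eulerProduct (cexp (-(α + θ * I))))⁻¹ * cexp (n * (α + θ * I)) with hf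
  set c : ℝ := √3 / 2 with hc
  have hc0 : 0 < c := by positivity
  have hc1 : c ≤ 1 := by
    have : √3 ≤ 2 := by
      rw [Real.sqrt_le_left (by norm_num)]
      norm_num
    linarith
  have hαc : α * c ≤ Real.pi := by nlinarith [Real.pi_gt_three]
  have htotal : ∫ θ in (-Real.pi)..Real.pi, f θ = 2 * Real.pi * Fintype.card n.Partition :=
    integral_eulerProduct_inv hα n
  have hfint : IntervalIntegrable f MeasureTheory.volume (-Real.pi) Real.pi := by
    refine intervalIntegral.intervalIntegrable_of_integral_ne_zero ?_
    rw [htotal]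
    exact mul_ne_zero (mul_ne_zero two_ne_zero (by exact_mod_cast hpi.ne'))
      (by exact_mod_cast Fintype.card_ne_zero)
  have hαc0 : 0 < α * c := by positivity
  have hsub : ∀ x y : ℝ, -Real.pi ≤ x → x ≤ y → y ≤ Real.pi →
      IntervalIntegrable f MeasureTheory.volume x y := by
    intro x y hx hxy hy
    refine hfint.mono_set ?_
    rw [Set.uIcc_of_le hxy, Set.uIcc_of_le (by linarith)]
    exact Set.Icc_subset_Icc hx hy
  have hi₁ := hsub (-Real.pi) (α * -c) le_rfl (by linarith) (by linarith)
  have hi₂ := hsub (α * -c) (α * c) (by linarith) (by linarith) hαc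
  have hi₃ := hsub (α * c) Real.pi (by linarith) hαc le_rfl
  have hsplit : ∫ θ in (-Real.pi)..Real.pi, f θ = (∫ θ in (-Real.pi)..(α * -c), f θ) +
      (∫ θ in (α * -c)..(α * c), f θ) + ∫ θ in (α * c)..Real.pi, f θ := by
    rw [intervalIntegral.integral_add_adjacent_intervals hi₁ hi₂,
      intervalIntegral.integral_add_adjacent_intervals (hi₁.trans hi₂) hi₃]
  have hf0 : ‖f 0‖ ≤ 2 * Real.exp (2 * b) := by
    have h := eulerProduct_inv_mul_exp_eq hα hαb hn (w := 1) (by simp)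
    have hone := hB₂ b hb₂ 1 (by norm_num)
    have hP : ‖(eulerProduct (cexp (-(24 * b * 1))))⁻¹‖ ≤ 2 := by
      have h1 := norm_le_norm_add_norm_sub' (eulerProduct (cexp (-(24 * b * 1))))⁻¹ 1
      have h2 : Real.exp (-b) ≤ 1 := Real.exp_le_one_iff.2 (by linarith)
      rw [norm_one] at h1
      linarith
    have hκ1 : √(α / (2 * Real.pi)) ≤ 1 := by
      refine Real.sqrt_le_one.2 ?_
      rw [div_le_one (by positivity)]
      linarith [Real.pi_gt_three]
    have hker : ‖saddleKernel b 1‖ = Real.exp (2 * b) := by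
      rw [saddleKernel, one_cpow, one_mul, norm_exp, re_ofReal_mul]
      norm_num
      ring
    have hval : f 0 = (√(α / (2 * Real.pi)) : ℝ) *
        (saddleKernel b 1 * (eulerProduct (cexp (-(24 * b * 1))))⁻¹) := by
      simpa [hf] using h
    rw [hval, norm_mul, norm_mul, hker, norm_real, Real.norm_of_nonneg (Real.sqrt_nonneg _)]
    refine (mul_le_of_le_one_left (by positivity) hκ1).trans ?_
    rw [mul_comm]
    gcongr
  have hminor : ∀ θ : ℝ, α * c ≤ |θ| → |θ| ≤ Real.pi → ‖f θ‖ ≤ 2 * Real.exp (139 / 70 * b) := by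
    intro θ h1 h2
    have h := norm_eulerProduct_inv_exp_le hα hα1 (by rwa [mul_comm]) h2
    have hexp : ‖cexp (n * (α + θ * I))‖ = ‖cexp (n * (α + (0 : ℝ) * I))‖ := by simp [norm_exp]
    have hgap : Real.exp (-1 / (42 * α)) ≤ Real.exp (-(b / 70)) := by
      rw [Real.exp_le_exp, neg_div, neg_le_neg_iff, div_le_div_iff₀ (by norm_num) (by positivity)]
      nlinarith
    calc ‖f θ‖ ≤ ‖(eulerProduct (cexp (-α)))⁻¹‖ * Real.exp (-1 / (42 * α)) *
          ‖cexp (n * (α + (0 : ℝ) * I))‖ := by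
          rw [hf, norm_mul, hexp]
          gcongr
      _ = ‖f 0‖ * Real.exp (-1 / (42 * α)) := by
          rw [hf, norm_mul]
          simp
          ring
      _ ≤ 2 * Real.exp (2 * b) * Real.exp (-(b / 70)) := by gcongr
      _ = _ := by
          rw [mul_assoc, ← Real.exp_add]
          ring_nf
  have hE : 0 < Real.exp (139 / 70 * b) := Real.exp_pos _
  have hm₁ : ‖∫ θ in (-Real.pi)..(α * -c), f θ‖ ≤ 2 * Real.pi * (2 * Real.exp (139 / 70 * b)) := by
    refine (intervalIntegral.norm_integral_le_of_norm_le_const (C := 2 * Real.exp (139 / 70 * b))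
      fun θ hθ ↦ ?_).trans ?_
    · rw [Set.uIoc_of_le (by linarith)] at hθ
      rw [mul_neg] at hθ
      have : |θ| = -θ := abs_of_nonpos (by linarith [hθ.2])
      exact hminor θ (by linarith [hθ.2]) (by linarith [hθ.1])
    · rw [abs_of_nonneg (by linarith), mul_comm]
      gcongr
      linarith
  have hm₂ : ‖∫ θ in (α * c)..Real.pi, f θ‖ ≤ 2 * Real.pi * (2 * Real.exp (139 / 70 * b)) := by
    refine (intervalIntegral.norm_integral_le_of_norm_le_const (C := 2 * Real.exp (139 / 70 * b))
      fun θ hθ ↦ ?_).trans ?_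
    · rw [Set.uIoc_of_le hαc] at hθ
      have : |θ| = θ := abs_of_pos (by linarith [hθ.1])
      exact hminor θ (by linarith [hθ.1]) (by linarith [hθ.2])
    · rw [abs_of_nonneg (by linarith), mul_comm]
      gcongr
      linarith
  have hM := hmajor α b n hα hα1 hαb hn hb₁ hi₂
  have hE' : Real.exp (7 / 4 * b) ≤ Real.exp (139 / 70 * b) := Real.exp_le_exp.2 (by linarith)
  have hre := congrArg re (hsplit.symm.trans htotal)
  have hre' : (2 * Real.pi * Fintype.card n.Partition : ℂ).re =
      2 * Real.pi * Fintype.card n.Partition := by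
    norm_cast
  rw [hre', add_re, add_re] at hre
  have hr₁ := abs_le.1 ((abs_re_le_norm _).trans hm₁)
  have hr₂ := abs_le.1 ((abs_re_le_norm _).trans hm₂)
  set A := Real.exp (2 * b) / b ^ 2 * (1 - 1 / (2 * b))
  have hK : Real.pi ^ 3 / (6 * √12) * A = 2 * Real.pi * (Real.pi ^ 2 / (12 * √12) * A) := by
    field_simp
    ring
  rw [hK] at hM
  have hM' := abs_le.1 (hM.trans (mul_le_mul_of_nonneg_left hE' hC))
  have hfin : |2 * Real.pi * ((Fintype.card n.Partition : ℝ) - Real.pi ^ 2 / (12 * √12) * A)| ≤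
      2 * Real.pi * ((C + 4 * Real.pi) * Real.exp (139 / 70 * b)) := by
    have hexpand : 2 * Real.pi * ((C + 4 * Real.pi) * Real.exp (139 / 70 * b)) =
        2 * (Real.pi * (C * Real.exp (139 / 70 * b))) +
          8 * (Real.pi * (Real.pi * Real.exp (139 / 70 * b))) := by ring
    have h1 : C * Real.exp (139 / 70 * b) ≤ Real.pi * (C * Real.exp (139 / 70 * b)) :=
      le_mul_of_one_le_left (by positivity) (by linarith [Real.pi_gt_three])
    have h2 : Real.pi * Real.exp (139 / 70 * b) ≤ Real.pi * (Real.pi * Real.exp (139 / 70 * b)) :=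
      mul_le_mul_of_nonneg_left (le_mul_of_one_le_left hE.le (by linarith [Real.pi_gt_three])) hpi.le
    have h3 : 0 ≤ C * Real.exp (139 / 70 * b) := by positivity
    rw [mul_sub, ← hre, hexpand, abs_le]
    constructor <;> linarith [hr₁.1, hr₁.2, hr₂.1, hr₂.2, hM'.1, hM'.2]
  rw [abs_mul, abs_of_pos (by positivity)] at hfin
  exact le_of_mul_le_mul_left hfin (by positivity)

end PartitionAsymptotics

section ForwardDifferences

open Asymptotics

lemma fwdDiff_iter_natCast_add (G : ℝ → ℝ) (c : ℝ) (r n : ℕ) :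
    (fwdDiff 1)^[r] (fun m : ℕ ↦ G (m + c)) n = (fwdDiff 1)^[r] G (n + c) := by
  simp only [fwdDiff_iter_eq_sum_shift]
  refine sum_congr rfl fun k _ ↦ ?_
  simp only [nsmul_eq_mul, mul_one, Nat.cast_add, smul_eq_mul, add_right_comm]

/-- Mean value theorem for iterated forward differences on the positive half-line. -/
lemma exists_fwdDiff_iter_eq (r : ℕ) : ∀ g : ℕ → ℝ → ℝ,
    (∀ k, ∀ x : ℝ, 0 < x → HasDerivAt (g k) (g (k + 1) x) x) → ∀ x : ℝ, 0 < x →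
    ∃ ξ ∈ Set.Icc x (x + r), (fwdDiff 1)^[r] (g 0) x = g r ξ := by
  induction r with
  | zero => exact fun g _ x _ ↦ ⟨x, by simp, rfl⟩
  | succ r ih =>
    intro g hg x hx
    obtain ⟨ξ, hξ, h⟩ := ih (fun k ↦ fwdDiff 1 (g k)) (fun k y hy ↦
      ((hg k (y + 1) (by positivity)).comp_add_const y 1).sub (hg k y hy)) x hx
    have hξ0 : 0 < ξ := hx.trans_le hξ.1
    obtain ⟨η, hη, h'⟩ := exists_hasDerivAt_eq_slope (g r) (g (r + 1)) (lt_add_one ξ)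
      (fun y hy ↦ (hg r y (hξ0.trans_le hy.1)).continuousAt.continuousWithinAt)
      (fun y hy ↦ hg r y (hξ0.trans hy.1))
    refine ⟨η, ⟨hξ.1.trans hη.1.le, ?_⟩, ?_⟩
    · push_cast
      linarith [hξ.2, hη.2]
    · rw [Function.iterate_succ_apply, h, h', fwdDiff]
      ring

lemma exists_fwdDiff_iter_rpow_eq (a : ℝ) (r : ℕ) {x : ℝ} (hx : 0 < x) :
    ∃ ξ ∈ Set.Icc x (x + r), (fwdDiff 1)^[r] (fun y : ℝ ↦ y ^ a) x =
      (∏ i ∈ range r, (a - i)) * ξ ^ (a - r) := by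
  have := exists_fwdDiff_iter_eq r (fun k y ↦ (∏ i ∈ range k, (a - i)) * y ^ (a - k))
    (fun k y hy ↦ ?_) x hx
  · simpa using this
  · have h := (Real.hasDerivAt_rpow_const (x := y) (p := a - k) (Or.inl hy.ne')).const_mul
      (∏ i ∈ range k, (a - i))
    convert! h using 1
    rw [prod_range_succ]
    push_cast
    ring_nf

lemma exists_fwdDiff_iter_log_eq (r : ℕ) {x : ℝ} (hx : 0 < x) :
    ∃ ξ ∈ Set.Icc x (x + (r + 1)), (fwdDiff 1)^[r + 1] Real.log x =
      (-1) ^ r * r.factorial * (ξ ^ (r + 1))⁻¹ := by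
  have := exists_fwdDiff_iter_eq (r + 1) (fun k ↦ Nat.casesOn k Real.log
    fun k y ↦ (-1) ^ k * k.factorial * (y ^ (k + 1))⁻¹) (fun k y hy ↦ ?_) x hx
  · simpa using this
  · cases k with
    | zero => simpa using Real.hasDerivAt_log hy.ne'
    | succ k =>
      have h := ((hasDerivAt_pow (k + 1) y).inv (pow_ne_zero _ hy.ne')).const_mul
        ((-1) ^ k * (k.factorial : ℝ))
      convert! h using 1
      simp only [Nat.factorial_succ]
      push_cast
      field_simp
      ring

lemma isLittleO_fwdDiff_iter {f : ℕ → ℝ} {s : ℕ} (hf : f =o[atTop] fun n : ℕ ↦ ((n : ℝ) ^ s)⁻¹)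
    (k : ℕ) : (fwdDiff 1)^[k] f =o[atTop] fun n : ℕ ↦ ((n : ℝ) ^ s)⁻¹ := by
  induction k with
  | zero => exact hf
  | succ k ih =>
    rw [Function.iterate_succ_apply']
    refine IsLittleO.sub ?_ ih
    refine (ih.comp_tendsto (tendsto_add_atTop_nat 1)).trans_isBigO (IsBigO.of_bound 1 ?_)
    filter_upwards [eventually_gt_atTop 0] with n hn
    have hn' : (0 : ℝ) < n := by exact_mod_cast hn
    simp only [Function.comp, norm_inv, norm_pow, one_mul, Real.norm_natCast]
    gcongr
    exact n.le_succ

lemma isBigO_inv_sub_pow (c : ℝ) (s : ℕ) :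
    (fun n : ℕ ↦ (((n : ℝ) + c) ^ s)⁻¹) =O[atTop] fun n : ℕ ↦ ((n : ℝ) ^ s)⁻¹ := by
  have h : (fun n : ℕ ↦ (n : ℝ)) =O[atTop] fun n : ℕ ↦ (n : ℝ) + c := by
    refine IsBigO.of_bound 2 ?_
    filter_upwards [tendsto_natCast_atTop_atTop.eventually_ge_atTop (2 * |c|)] with n hn
    have h1 := abs_nonneg c
    have h2 := neg_abs_le c
    rw [Real.norm_of_nonneg (by linarith), Real.norm_of_nonneg (by linarith)]
    linarith
  refine (h.pow s).inv_rev ?_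
  filter_upwards [eventually_gt_atTop 0] with n hn h0
  have hn' : (0 : ℝ) < n := by exact_mod_cast hn
  exact absurd h0 (by positivity)

lemma isLittleO_fwdDiff_iter_rpow_of_neg {a : ℝ} (ha : a < 0) (c : ℝ) (r : ℕ) :
    (fwdDiff 1)^[r] (fun n : ℕ ↦ ((n : ℝ) + c) ^ a) =o[atTop] fun n : ℕ ↦ ((n : ℝ) ^ r)⁻¹ := by
  have htop : Tendsto (fun n : ℕ ↦ (n : ℝ) + c) atTop atTop :=
    tendsto_atTop_add_const_right _ _ tendsto_natCast_atTop_atTop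
  have h0 : Tendsto (fun n : ℕ ↦ ((n : ℝ) + c) ^ a) atTop (𝓝 0) := by
    have := (tendsto_rpow_neg_atTop (neg_pos.2 ha)).comp htop
    simpa using! this
  have h1 := ((isLittleO_one_iff ℝ).2 h0).mul_isBigO (isBigO_inv_sub_pow c r)
  simp only [one_mul] at h1
  refine IsBigO.trans_isLittleO (IsBigO.of_bound |∏ i ∈ range r, (a - i)| ?_) h1
  filter_upwards [htop.eventually_gt_atTop 0] with n hn
  obtain ⟨ξ, hξ, h⟩ := exists_fwdDiff_iter_rpow_eq a r hn
  rw [fwdDiff_iter_natCast_add (fun y ↦ y ^ a), h, norm_mul, Real.norm_eq_abs]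
  have hr : (0 : ℝ) ≤ r := r.cast_nonneg
  refine mul_le_mul_of_nonneg_left ?_ (abs_nonneg _)
  rw [Real.norm_of_nonneg (Real.rpow_nonneg (hn.trans_le hξ.1).le _),
    Real.norm_of_nonneg (by positivity), ← Real.rpow_natCast, ← Real.rpow_neg hn.le,
    ← Real.rpow_add hn]
  exact Real.rpow_le_rpow_of_nonpos hn hξ.1 (by linarith)

end ForwardDifferences

section LogPartitionAsymptotics

open Asymptotics

lemma abs_log_sub_log_le {p M δ : ℝ} (hM : 0 < M) (hδ : δ ≤ 1 / 2) (h : |p - M| ≤ δ * M) :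
    |Real.log p - Real.log M| ≤ 2 * δ := by
  rw [abs_le] at h
  have hp : M / 2 ≤ p := by nlinarith
  have hp0 : 0 < p := by linarith
  have hδ0 : 0 ≤ δ := by
    by_contra! hneg
    nlinarith
  rw [← Real.log_div hp0.ne' hM.ne', abs_le]
  constructor
  · have h1 := Real.one_sub_inv_le_log_of_pos (div_pos hp0 hM)
    refine le_trans ?_ h1
    rw [inv_div, le_sub_comm, div_le_iff₀ hp0]
    nlinarith
  · have h1 := Real.log_le_sub_one_of_pos (div_pos hp0 hM)
    refine h1.trans ?_
    rw [sub_le_iff_le_add, div_le_iff₀ hM]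
    nlinarith

/-- The saddle point parameter of the `n`-th partition number. -/
noncomputable def partitionSaddle (n : ℕ) : ℝ := Real.pi * √((n - 1 / 24) / 6)

lemma tendsto_partitionSaddle : Tendsto partitionSaddle atTop atTop := by
  refine Tendsto.const_mul_atTop Real.pi_pos (Real.tendsto_sqrt_atTop.comp ?_)
  exact (tendsto_atTop_add_const_right _ (-(1 / 24) : ℝ)
    tendsto_natCast_atTop_atTop).atTop_div_const (by norm_num)

lemma partitionSaddle_sq {n : ℕ} (hn : 1 ≤ n) :
    partitionSaddle n ^ 2 = Real.pi ^ 2 / 6 * (n + -(1 / 24)) := by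
  have hn' : (1 : ℝ) ≤ n := by exact_mod_cast hn
  rw [partitionSaddle, mul_pow, Real.sq_sqrt (by linarith)]
  ring

lemma isBigO_inv_partitionSaddle_sq_pow (s : ℕ) :
    (fun n ↦ ((partitionSaddle n ^ 2) ^ s)⁻¹) =O[atTop] fun n : ℕ ↦ ((n : ℝ) ^ s)⁻¹ := by
  refine ((isBigO_inv_sub_pow (-(1 / 24)) s).const_mul_left (((Real.pi ^ 2 / 6) ^ s)⁻¹)).congr' ?_
    EventuallyEq.rfl
  filter_upwards [eventually_ge_atTop 1] with n hn
  rw [partitionSaddle_sq hn, mul_pow, mul_inv]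

lemma isLittleO_sq_mul_exp_neg (s : ℕ) :
    (fun n ↦ partitionSaddle n ^ 2 * Real.exp (-(1 / 70) * partitionSaddle n)) =o[atTop]
      fun n : ℕ ↦ ((n : ℝ) ^ s)⁻¹ := by
  have h : (fun x : ℝ ↦ x ^ 2 * Real.exp (-(1 / 70) * x)) =o[atTop] fun x ↦ ((x ^ 2) ^ s)⁻¹ := by
    have h1 := (isBigO_refl (fun x : ℝ ↦ x ^ 2) atTop).mul_isLittleO
      (isLittleO_exp_neg_mul_rpow_atTop (a := 1 / 70) (by norm_num) (-((2 + 2 * s : ℕ) : ℝ)))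
    refine h1.congr' EventuallyEq.rfl ?_
    filter_upwards [eventually_gt_atTop 0] with x hx
    rw [Real.rpow_neg hx.le, Real.rpow_natCast, ← pow_mul, pow_add]
    field_simp
  exact (h.comp_tendsto tendsto_partitionSaddle).trans_isBigO (isBigO_inv_partitionSaddle_sq_pow s)

/-- The main term in the asymptotic formula for the partition numbers. -/
noncomputable def partitionMainTerm (n : ℕ) : ℝ :=
  Real.pi ^ 2 / (12 * √12) * (Real.exp (2 * partitionSaddle n) / partitionSaddle n ^ 2 *
    (1 - 1 / (2 * partitionSaddle n)))

lemma isLittleO_log_card_partition_sub (s : ℕ) :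
    (fun n : ℕ ↦ Real.log (Fintype.card n.Partition) - Real.log (partitionMainTerm n)) =o[atTop]
      fun n : ℕ ↦ ((n : ℝ) ^ s)⁻¹ := by
  obtain ⟨C, B, hCB⟩ := exists_abs_card_partition_sub_le
  set K : ℝ := Real.pi ^ 2 / (12 * √12) with hK
  have hK0 : 0 < K := by have := Real.pi_pos; positivity
  have hsmall := (isLittleO_sq_mul_exp_neg s).const_mul_left (2 * |C| / K)
  have hsmall0 := ((isLittleO_sq_mul_exp_neg 0).const_mul_left (2 * |C| / K))
  simp only [pow_zero, inv_one, isLittleO_one_iff] at hsmall0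
  refine IsBigO.trans_isLittleO (IsBigO.of_bound 2 ?_) hsmall
  filter_upwards [hsmall0.eventually_le_const (show (0 : ℝ) < 1 / 2 by norm_num),
    tendsto_partitionSaddle.eventually_ge_atTop B,
    tendsto_partitionSaddle.eventually_ge_atTop 1] with n hδ hB h1
  have h := hCB n _ rfl hB
  change |_ - partitionMainTerm n| ≤ _ at h
  have hb0 : 0 < partitionSaddle n := by linarith
  have hhalf : 1 / 2 ≤ 1 - 1 / (2 * partitionSaddle n) := by
    have : 1 / (2 * partitionSaddle n) ≤ 1 / 2 :=
      one_div_le_one_div_of_le (by norm_num) (by linarith)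
    linarith
  set b := partitionSaddle n with hb
  have hM : K * (Real.exp (2 * b) / b ^ 2 * (1 / 2)) ≤ partitionMainTerm n := by
    rw [partitionMainTerm]
    gcongr
  have hδ0 : 0 ≤ 2 * |C| / K * (b ^ 2 * Real.exp (-(1 / 70) * b)) := by positivity
  rw [Real.norm_eq_abs, Real.norm_of_nonneg hδ0]
  refine abs_log_sub_log_le (lt_of_lt_of_le (by positivity) hM) hδ (h.trans ?_)
  refine le_trans ?_ (mul_le_mul_of_nonneg_left hM hδ0)
  calc C * Real.exp (139 / 70 * b) ≤ |C| * Real.exp (-(1 / 70) * b + 2 * b) := by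
        gcongr
        · exact le_abs_self C
        · linarith
    _ = _ := by
        rw [Real.exp_add]
        field_simp

lemma isLittleO_log_one_sub (s : ℕ) :
    (fun n ↦ ∑ i ∈ range (2 * s), (1 / (2 * partitionSaddle n)) ^ (i + 1) / (i + 1) +
      Real.log (1 - 1 / (2 * partitionSaddle n))) =o[atTop] fun n : ℕ ↦ ((n : ℝ) ^ s)⁻¹ := by
  have h0 : Tendsto (fun n ↦ 1 / (2 * partitionSaddle n)) atTop (𝓝 0) :=
    (tendsto_partitionSaddle.const_mul_atTop zero_lt_two).const_div_atTop 1
  have h1 := ((isLittleO_one_iff ℝ).2 h0).mul_isBigO (isBigO_inv_partitionSaddle_sq_pow s)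
  simp only [one_mul] at h1
  refine IsBigO.trans_isLittleO (IsBigO.of_bound 2 ?_) h1
  filter_upwards [tendsto_partitionSaddle.eventually_ge_atTop 1] with n hb
  set b := partitionSaddle n
  have hb0 : 0 < b := by linarith
  have hu0 : 0 < 1 / (2 * b) := by positivity
  have hu : 1 / (2 * b) ≤ 1 / 2 := one_div_le_one_div_of_le (by norm_num) (by linarith)
  have h := Real.abs_log_sub_add_sum_range_le (x := 1 / (2 * b))
    (by rw [abs_of_pos hu0]; linarith) (2 * s)
  rw [abs_of_pos hu0] at h
  rw [Real.norm_eq_abs, Real.norm_of_nonneg (by positivity)]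
  refine h.trans ?_
  rw [div_le_iff₀ (by linarith)]
  have hpow : (1 / (2 * b)) ^ (2 * s + 1) ≤ 1 / (2 * b) * ((b ^ 2) ^ s)⁻¹ := by
    rw [pow_succ', ← pow_mul, ← inv_pow]
    gcongr
    rw [one_div]
    exact inv_anti₀ hb0 (by linarith)
  have : 0 ≤ 1 / (2 * b) * ((b ^ 2) ^ s)⁻¹ := by positivity
  nlinarith

/-- An asymptotic expansion of the logarithm of the partition numbers. -/
lemma exists_isLittleO_log_card_partition (s : ℕ) : ∃ (c₀ : ℝ) (c : ℕ → ℝ),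
    (fun n : ℕ ↦ Real.log (Fintype.card n.Partition) - (c₀ +
      2 * (√6 * Real.pi / 6) * ((n : ℝ) + -(1 / 24)) ^ (1 / 2 : ℝ) -
      Real.log ((n : ℝ) + -(1 / 24)) +
      ∑ i ∈ range (2 * s), c i * ((n : ℝ) + -(1 / 24)) ^ (-((i : ℝ) + 1) / 2))) =o[atTop]
      fun n : ℕ ↦ ((n : ℝ) ^ s)⁻¹ := by
  refine ⟨Real.log (Real.pi ^ 2 / (12 * √12)) - Real.log (Real.pi ^ 2 / 6),
    fun i ↦ -((√6 / (2 * Real.pi)) ^ (i + 1) / (i + 1)), ?_⟩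
  refine ((isLittleO_log_card_partition_sub s).add (isLittleO_log_one_sub s)).congr' ?_
    EventuallyEq.rfl
  filter_upwards [eventually_ge_atTop 1, tendsto_partitionSaddle.eventually_ge_atTop 1] with n hn hb
  have hpi := Real.pi_pos
  have hn' : (1 : ℝ) ≤ n := by exact_mod_cast hn
  have hsq := partitionSaddle_sq hn
  set y : ℝ := (n : ℝ) + -(1 / 24) with hy
  have hy0 : 0 < y := by linarith
  have hb1 : partitionSaddle n = √6 * Real.pi / 6 * y ^ (1 / 2 : ℝ) := by
    rw [partitionSaddle, ← Real.sqrt_eq_rpow, Real.sqrt_div' _ (by norm_num), hy, ← sub_eq_add_neg]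
    have h6 : √6 * √6 = (6 : ℝ) := Real.mul_self_sqrt (by norm_num)
    generalize √((n : ℝ) - 1 / 24) = t
    field_simp
    linear_combination -t * h6
  set b := partitionSaddle n with hbdef
  have hb0 : 0 < b := by linarith
  have hu1 : 1 / (2 * b) < 1 := by
    rw [div_lt_one (by positivity)]
    linarith
  have hlogM : Real.log (partitionMainTerm n) = Real.log (Real.pi ^ 2 / (12 * √12)) +
      (2 * b - Real.log (b ^ 2) + Real.log (1 - 1 / (2 * b))) := by
    rw [partitionMainTerm, ← hbdef, Real.log_mul (by positivity) (mul_ne_zero (by positivity)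
      (by linarith)), Real.log_mul (by positivity) (by linarith), Real.log_div
      (Real.exp_pos _).ne' (by positivity), Real.log_exp]
  have hu : ∀ i : ℕ, (1 / (2 * b)) ^ (i + 1) =
      (√6 / (2 * Real.pi)) ^ (i + 1) * y ^ (-((i : ℝ) + 1) / 2) := by
    intro i
    have h1 : 1 / (2 * b) = √6 / (2 * Real.pi) * y ^ (-(1 / 2) : ℝ) := by
      rw [hb1, Real.rpow_neg hy0.le]
      have h6 : √6 * √6 = (6 : ℝ) := Real.mul_self_sqrt (by norm_num)
      field_simp
      linear_combination -h6
    rw [h1, mul_pow, ← Real.rpow_mul_natCast hy0.le]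
    congr 2
    push_cast
    ring
  have hsum : ∑ i ∈ range (2 * s), -((√6 / (2 * Real.pi)) ^ (i + 1) / (i + 1)) *
      y ^ (-((i : ℝ) + 1) / 2) = -∑ i ∈ range (2 * s), (1 / (2 * b)) ^ (i + 1) / (i + 1) := by
    rw [← sum_neg_distrib]
    refine sum_congr rfl fun i _ ↦ ?_
    rw [hu]
    ring
  rw [hlogM, hsum, hsq, Real.log_mul (by positivity) hy0.ne']
  linear_combination (-2 : ℝ) * hb1

end LogPartitionAsymptotics

section LogPartitionDifferences

open Asymptotics

lemma neg_one_pow_mul_prod_half_sub (m : ℕ) :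
    (-1 : ℝ) ^ m * ∏ i ∈ range (m + 1), ((1 / 2 : ℝ) - i) =
      1 / 2 * ∏ i ∈ range m, ((1 / 2 : ℝ) + i) := by
  rw [prod_range_succ', ← mul_assoc, ← card_range m, ← prod_const, card_range, ← prod_mul_distrib,
    mul_comm]
  congr 1
  · simp
  · refine prod_congr rfl fun i _ ↦ ?_
    push_cast
    ring

lemma exists_fwdDiff_iter_log_card_partition_le (m : ℕ) : ∃ e : ℕ → ℝ,
    e =o[atTop] (fun n : ℕ ↦ ((n : ℝ) ^ (m + 1))⁻¹) ∧ ∀ n : ℕ, 1 ≤ n →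
    (-1) ^ m * (fwdDiff 1)^[m + 1] (fun n : ℕ ↦ Real.log (Fintype.card n.Partition)) n ≤
      √6 * Real.pi / 6 * (∏ i ∈ range m, ((1 / 2 : ℝ) + i)) *
        ((n : ℝ) + -(1 / 24)) ^ (-((m : ℝ) + 1 / 2)) -
      m.factorial * (((n : ℝ) + (m + 1 : ℕ)) ^ (m + 1))⁻¹ + e n := by
  obtain ⟨c₀, c, hε⟩ := exists_isLittleO_log_card_partition (m + 1)
  set A : ℝ := √6 * Real.pi / 6 with hA
  set S : ℕ → ℝ := fun n ↦ ((n : ℝ) + -(1 / 24)) ^ (1 / 2 : ℝ) with hS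
  set L : ℕ → ℝ := fun n ↦ Real.log ((n : ℝ) + -(1 / 24)) with hL
  set Q : ℕ → ℕ → ℝ := fun i n ↦ ((n : ℝ) + -(1 / 24)) ^ (-((i : ℝ) + 1) / 2) with hQ
  set ε : ℕ → ℝ := fun n ↦ Real.log (Fintype.card n.Partition) - (c₀ + 2 * A * S n - L n +
    ∑ i ∈ range (2 * (m + 1)), c i * Q i n) with hεdef
  have hdecomp : (fun n : ℕ ↦ Real.log (Fintype.card n.Partition)) =
      ε + ((fun _ ↦ c₀) + ((2 * A) • S + ((-1 : ℝ) • L +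
        ∑ i ∈ range (2 * (m + 1)), c i • Q i))) := by
    funext n
    simp only [hεdef, Pi.add_apply, Pi.smul_apply, Finset.sum_apply, smul_eq_mul]
    ring
  have hconst : (fwdDiff 1)^[m + 1] (fun _ : ℕ ↦ c₀) = 0 := by
    rw [Function.iterate_succ_apply, fwdDiff_const]
    clear * -
    induction m with
    | zero => rfl
    | succ m ih => rw [Function.iterate_succ_apply, fwdDiff_const, ih]
  refine ⟨fun n ↦ (-1) ^ m * ((fwdDiff 1)^[m + 1] ε n +
    ∑ i ∈ range (2 * (m + 1)), c i * (fwdDiff 1)^[m + 1] (Q i) n), ?_, fun n hn ↦ ?_⟩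
  · refine ((isLittleO_fwdDiff_iter hε _).add (IsLittleO.fun_sum fun i _ ↦ ?_)).const_mul_left _
    refine (isLittleO_fwdDiff_iter_rpow_of_neg ?_ _ _).const_mul_left _
    have : (0 : ℝ) ≤ i := i.cast_nonneg
    linarith
  · have hn' : (1 : ℝ) ≤ n := by exact_mod_cast hn
    have hy : 0 < (n : ℝ) + -(1 / 24) := by linarith
    rw [hdecomp]
    simp only [fwdDiff_iter_add, fwdDiff_iter_const_smul, fwdDiff_iter_finsetSum, hconst,
      Pi.add_apply, Pi.smul_apply, Finset.sum_apply, smul_eq_mul, Pi.zero_apply]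
    have hSle : (-1) ^ m * (2 * A * (fwdDiff 1)^[m + 1] S n) ≤
        A * (∏ i ∈ range m, ((1 / 2 : ℝ) + i)) *
          ((n : ℝ) + -(1 / 24)) ^ (-((m : ℝ) + 1 / 2)) := by
      obtain ⟨ξ, hξ, h⟩ := exists_fwdDiff_iter_rpow_eq (1 / 2) (m + 1) hy
      rw [hS, fwdDiff_iter_natCast_add (fun y ↦ y ^ (1 / 2 : ℝ)), h]
      have hpow : ξ ^ (1 / 2 - ((m + 1 : ℕ) : ℝ)) ≤
          ((n : ℝ) + -(1 / 24)) ^ (-((m : ℝ) + 1 / 2)) := by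
        rw [show 1 / 2 - ((m + 1 : ℕ) : ℝ) = -((m : ℝ) + 1 / 2) by push_cast; ring]
        exact Real.rpow_le_rpow_of_nonpos hy hξ.1 (neg_nonpos.2 (by positivity))
      calc _ = 2 * A * ((-1) ^ m * ∏ i ∈ range (m + 1), ((1 / 2 : ℝ) - i)) *
            ξ ^ (1 / 2 - ((m + 1 : ℕ) : ℝ)) := by ring
        _ = A * (∏ i ∈ range m, ((1 / 2 : ℝ) + i)) * ξ ^ (1 / 2 - ((m + 1 : ℕ) : ℝ)) := by
            rw [neg_one_pow_mul_prod_half_sub]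
            ring
        _ ≤ _ := by
            refine mul_le_mul_of_nonneg_left hpow ?_
            have := Real.pi_pos
            positivity
    have hLle : (-1) ^ m * (-1 * (fwdDiff 1)^[m + 1] L n) ≤
        -(m.factorial * (((n : ℝ) + (m + 1 : ℕ)) ^ (m + 1))⁻¹) := by
      obtain ⟨ξ, hξ, h⟩ := exists_fwdDiff_iter_log_eq m hy
      have hξ0 := hy.trans_le hξ.1
      rw [hL, fwdDiff_iter_natCast_add Real.log, h]
      have hsign : ((-1 : ℝ) ^ m) * (-1) ^ m = 1 := by rw [← mul_pow]; simp
      calc _ = -((-1 : ℝ) ^ m * (-1) ^ m * (m.factorial * (ξ ^ (m + 1))⁻¹)) := by ring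
        _ = -(m.factorial * (ξ ^ (m + 1))⁻¹) := by rw [hsign, one_mul]
        _ ≤ _ := by
            gcongr
            push_cast
            linarith [hξ.2]
    linarith [hSle, hLle]

lemma isLittleO_rpow_neg_sub (m : ℕ) :
    (fun n : ℕ ↦ ((n : ℝ) + -(1 / 24)) ^ (-((m : ℝ) + 1 / 2)) -
      ((n : ℝ) + 1) ^ (-((m : ℝ) + 1 / 2))) =o[atTop] fun n : ℕ ↦ ((n : ℝ) ^ (m + 1))⁻¹ := by
  have htop : Tendsto (fun n : ℕ ↦ (n : ℝ) + -(1 / 24)) atTop atTop :=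
    tendsto_atTop_add_const_right _ _ tendsto_natCast_atTop_atTop
  have h0 : Tendsto (fun n : ℕ ↦ ((n : ℝ) + -(1 / 24)) ^ (-(1 / 2) : ℝ)) atTop (𝓝 0) :=
    (tendsto_rpow_neg_atTop (by norm_num)).comp htop
  have h1 := ((isLittleO_one_iff ℝ).2 h0).mul_isBigO (isBigO_inv_sub_pow (-(1 / 24)) (m + 1))
  simp only [one_mul] at h1
  refine IsBigO.trans_isLittleO (IsBigO.of_bound (((m : ℝ) + 1 / 2) * (25 / 24)) ?_) h1
  filter_upwards [eventually_ge_atTop 1] with n hn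
  have hn' : (1 : ℝ) ≤ n := by exact_mod_cast hn
  set y : ℝ := (n : ℝ) + -(1 / 24) with hy
  have hy0 : 0 < y := by linarith
  obtain ⟨ξ, hξ, h⟩ := exists_hasDerivAt_eq_slope (fun x : ℝ ↦ x ^ (-((m : ℝ) + 1 / 2)))
    (fun x ↦ -((m : ℝ) + 1 / 2) * x ^ (-((m : ℝ) + 1 / 2) - 1))
    (show y < (n : ℝ) + 1 by linarith)
    (fun x hx ↦ (Real.hasDerivAt_rpow_const
      (Or.inl (hy0.trans_le hx.1).ne')).continuousAt.continuousWithinAt)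
    (fun x hx ↦ Real.hasDerivAt_rpow_const (Or.inl (hy0.trans hx.1).ne'))
  have hlen : (n : ℝ) + 1 - y = 25 / 24 := by
    rw [hy]
    ring
  rw [hlen, eq_div_iff (by norm_num)] at h
  have hval : y ^ (-((m : ℝ) + 1 / 2)) - ((n : ℝ) + 1) ^ (-((m : ℝ) + 1 / 2)) =
      ((m : ℝ) + 1 / 2) * (25 / 24) * ξ ^ (-((m : ℝ) + 1 / 2) - 1) := by
    linear_combination h
  have hξ0 : 0 < ξ := hy0.trans hξ.1
  rw [hval, Real.norm_of_nonneg (by positivity), Real.norm_of_nonneg (by positivity),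
    ← Real.rpow_natCast, ← Real.rpow_neg hy0.le, ← Real.rpow_add hy0]
  refine mul_le_mul_of_nonneg_left ?_ (by positivity)
  rw [show -(1 / 2) + -((m + 1 : ℕ) : ℝ) = -((m : ℝ) + 1 / 2) - 1 by push_cast; ring]
  refine Real.rpow_le_rpow_of_nonpos hy0 hξ.1.le ?_
  have : (0 : ℝ) ≤ m := m.cast_nonneg
  linarith

lemma eventually_fwdDiff_iter_log_card_partition_lt (m : ℕ) : ∀ᶠ n : ℕ in atTop,
    (-1) ^ m * (fwdDiff 1)^[m + 1] (fun n : ℕ ↦ Real.log (Fintype.card n.Partition)) n <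
      Real.log (1 + √6 * Real.pi / 6 * (∏ i ∈ range m, ((1 / 2 : ℝ) + i)) *
        ((n : ℝ) + 1) ^ (-((m : ℝ) + 1 / 2))) := by
  obtain ⟨e, he, hle⟩ := exists_fwdDiff_iter_log_card_partition_le m
  have hpi := Real.pi_pos
  set a : ℝ := √6 * Real.pi / 6 * ∏ i ∈ range m, ((1 / 2 : ℝ) + i) with ha
  have ha0 : 0 < a := by positivity
  obtain ⟨l, hl, hlt⟩ : ∃ l : ℝ, Tendsto (fun n : ℕ ↦ (((n : ℝ) + 1) ^ m)⁻¹) atTop (𝓝 l) ∧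
      a ^ 2 / 2 * (1 * l) < m.factorial := by
    have htop : Tendsto (fun n : ℕ ↦ (n : ℝ) + 1) atTop atTop :=
      tendsto_atTop_add_const_right _ _ tendsto_natCast_atTop_atTop
    rcases Nat.eq_zero_or_pos m with rfl | hm
    · refine ⟨1, by simp, ?_⟩
      have h6 : √6 ^ 2 = (6 : ℝ) := Real.sq_sqrt (by norm_num)
      have ha2 : a ^ 2 = Real.pi ^ 2 / 6 := by
        rw [ha, range_zero, prod_empty, mul_one, div_pow, mul_pow, h6]
        ring
      rw [ha2]
      norm_num
      nlinarith [Real.pi_lt_d2]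
    · refine ⟨0, tendsto_inv_atTop_zero.comp ((tendsto_pow_atTop hm.ne').comp htop), ?_⟩
      simpa using m.factorial_pos
  have hratio : ∀ c : ℝ, Tendsto (fun n : ℕ ↦ (n : ℝ) ^ (m + 1) * (((n : ℝ) + c) ^ (m + 1))⁻¹)
      atTop (𝓝 1) := by
    intro c
    have := (tendsto_natCast_div_add_atTop c).pow (m + 1)
    simpa only [div_pow, div_eq_mul_inv, one_pow, inv_pow, mul_pow] using this
  have hzero : ∀ f : ℕ → ℝ, f =o[atTop] (fun n : ℕ ↦ ((n : ℝ) ^ (m + 1))⁻¹) →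
      Tendsto (fun n : ℕ ↦ (n : ℝ) ^ (m + 1) * f n) atTop (𝓝 0) := by
    intro f hf
    refine hf.tendsto_div_nhds_zero.congr fun n ↦ ?_
    rw [div_inv_eq_mul, mul_comm]
  have hlim := ((((hratio (m + 1 : ℕ)).const_mul (m.factorial : ℝ)).sub
    (((hratio 1).mul hl).const_mul (a ^ 2 / 2))).sub
    ((hzero _ (isLittleO_rpow_neg_sub m)).const_mul a)).sub (hzero _ he)
  have hpos : 0 < m.factorial * 1 - a ^ 2 / 2 * (1 * l) - a * 0 - 0 := by linarith
  filter_upwards [hlim.eventually_const_lt hpos, eventually_ge_atTop 1] with n hn hn1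
  have hn' : (1 : ℝ) ≤ n := by exact_mod_cast hn1
  refine (hle n hn1).trans_lt ?_
  set x : ℝ := ((n : ℝ) + 1) ^ (-((m : ℝ) + 1 / 2)) with hx
  have hx0 : 0 < x := by positivity
  have hx2 : x ^ 2 = (((n : ℝ) + 1) ^ (m + 1))⁻¹ * (((n : ℝ) + 1) ^ m)⁻¹ := by
    rw [hx, ← Real.rpow_mul_natCast (by positivity), ← mul_inv, ← pow_add, ← Real.rpow_natCast,
      ← Real.rpow_neg (by positivity)]
    congr 1
    push_cast
    ring
  have hlog : a * x - (a * x) ^ 2 / 2 ≤ Real.log (1 + a * x) := by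
    refine le_trans ?_ (Real.le_log_one_add_of_nonneg (by positivity))
    have : 0 < a * x := by positivity
    rw [le_div_iff₀ (by positivity)]
    nlinarith [pow_pos this 3]
  refine lt_of_lt_of_le ?_ hlog
  have hnpow : 0 < (n : ℝ) ^ (m + 1) := by positivity
  rw [mul_pow, hx2]
  have := pos_of_mul_pos_right (a := (n : ℝ) ^ (m + 1))
    (b := m.factorial * (((n : ℝ) + (m + 1 : ℕ)) ^ (m + 1))⁻¹ -
      a ^ 2 * ((((n : ℝ) + 1) ^ (m + 1))⁻¹ * (((n : ℝ) + 1) ^ m)⁻¹) / 2 -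
      a * (((n : ℝ) + -(1 / 24)) ^ (-((m : ℝ) + 1 / 2)) - x) - e n)
    (lt_of_lt_of_eq hn (by ring)) hnpow.le
  linarith

end LogPartitionDifferences

end PartitionNumbers

open Real in
theorem stmt_19 (p : ℕ → ℕ) (hp : ∀ n, p n = Fintype.card (Nat.Partition n))
    (r : ℕ) (hr : 1 ≤ r) :
    ∃ N : ℕ, 0 < N ∧ ∀ n : ℕ, N ≤ n →
      (-1 : ℝ) ^ (r - 1) *
        ((fun g : ℕ → ℝ => fun m => g (m + 1) - g m)^[r] (fun m => Real.log (p m)) n) <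
      Real.log (1 + (Real.sqrt 6 * π / 6) *
        (∏ i ∈ Finset.range (r - 1), ((1:ℝ)/2 + i)) / ((n : ℝ) + 1) ^ ((r : ℝ) - 1/2)) := by
  obtain ⟨m, rfl⟩ := Nat.exists_eq_add_of_le' hr
  obtain ⟨N, hN⟩ := Filter.eventually_atTop.1 (eventually_fwdDiff_iter_log_card_partition_lt m)
  refine ⟨N + 1, N.succ_pos, fun n hn ↦ ?_⟩
  have h := hN n (by omega)
  simp only [hp, Nat.add_sub_cancel]
  refine lt_of_lt_of_eq h ?_
  rw [Real.rpow_neg (by positivity), ← div_eq_mul_inv]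
  congr 4
  push_cast
  ring
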